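/- arXiv:2303.13185 — 3 statements merged into one kernel-verified Lean document; each statement's English description precedes it below -/
import Mathlib

section
/- There exists a constant c such that for all binary strings x and y: |C(x, y) − (C(x) + C(y|x))| ≤ c·log(C(x, y) + 2). (Kolmogorov–Levin symmetry of information: the decomposition H(x,y) ∼ H(x) + H(y|x) holds with precision O(log H(x,y)).) -/
open scoped Classical

/-- Binary strings: finite sequences over `{0,1}`. -/
abbrev BStr := List Bool

/-- Complexity of `x` with respect to the description method `D`:
the minimal length of a `p` with `D(p) = x`, as an extended natural
(`⊤` if no such `p` exists). -/
noncomputable def Cw (D : BStr →. BStr) (x : BStr) : ℕ∞ :=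
  ⨅ (p : BStr) (_ : x ∈ D p), (p.length : ℕ∞)

/-- A description method is optimal if it is partial computable and gives
complexity at most that of any other partial computable description method,
up to an additive constant. -/
def OptimalDM (D : BStr →. BStr) : Prop :=
  Partrec D ∧ ∀ D' : BStr →. BStr, Partrec D' →
    ∃ c : ℕ, ∀ x : BStr, Cw D x ≤ Cw D' x + (c : ℕ∞)

/-- Plain Kolmogorov complexity (finite value) w.r.t. a description method. -/
noncomputable def C (D : BStr →. BStr) (x : BStr) : ℕ := (Cw D x).toNat

/-- Conditional complexity of `x` given `y` w.r.t. the conditional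
description method `E`. -/
noncomputable def CwCond (E : BStr → BStr →. BStr) (x y : BStr) : ℕ∞ :=
  ⨅ (p : BStr) (_ : x ∈ E p y), (p.length : ℕ∞)

/-- Optimal conditional description method. -/
def OptimalCDM (E : BStr → BStr →. BStr) : Prop :=
  Partrec₂ E ∧ ∀ E' : BStr → BStr →. BStr, Partrec₂ E' →
    ∃ c : ℕ, ∀ x y : BStr, CwCond E x y ≤ CwCond E' x y + (c : ℕ∞)

/-- Conditional Kolmogorov complexity (finite value). -/
noncomputable def Ccond (E : BStr → BStr →. BStr) (x y : BStr) : ℕ :=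
  (CwCond E x y).toNat

/-- `enc` is a computable injective encoding of finite sets of binary strings
as binary strings (computability is expressed on the level of lists of
elements, since every finite set is the set of members of a list). -/
def SetEncoding (enc : Finset BStr → BStr) : Prop :=
  Function.Injective enc ∧ Computable (fun l : List BStr => enc l.toFinset)

/-- A computable step-counting semantics for the description method `D`:
`ev t p` is the output of `D` on program `p` within `t` computation steps
(`none` if the computation has not converged within `t` steps). -/
structure TimedDM (D : BStr →. BStr) where
  ev : ℕ → BStr → Option BStr
  computable : Computable₂ ev
  mono : ∀ {t t' : ℕ} {p y : BStr}, t ≤ t' → ev t p = some y → ev t' p = some y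
  spec : ∀ p y : BStr, y ∈ D p ↔ ∃ t : ℕ, ev t p = some y

/-- Time-bounded complexity `C^t(x)`: the minimal length of a program
producing `x` within `t` steps (`⊤` if there is none). -/
noncomputable def Cwt (ev : ℕ → BStr → Option BStr) (t : ℕ) (x : BStr) : ℕ∞ :=
  ⨅ (p : BStr) (_ : ev t p = some x), (p.length : ℕ∞)

/-- `B D k`: the largest natural number whose binary representation has
complexity at most `k` (naturals are identified with their binary
representations via `Nat.bits`). -/
noncomputable def B (D : BStr →. BStr) (k : ℕ) : ℕ :=
  sSup {m : ℕ | Cw D (Nat.bits m) ≤ (k : ℕ∞)}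

/-- Kolmogorov's `(α,β)`-stochasticity: `x` belongs to a finite set `S` of
complexity at most `α` in which it is random up to `β`. -/
def Stochastic (D : BStr →. BStr) (enc : Finset BStr → BStr)
    (α β : ℕ) (x : BStr) : Prop :=
  ∃ S : Finset BStr, x ∈ S ∧ C D (enc S) ≤ α ∧
    Real.logb 2 S.card - β ≤ (C D x : ℝ)

/-- The binary entropy function (with the convention `H(0) = H(1) = 0`,
which holds automatically since `logb 2 0 = 0` in Mathlib). -/
noncomputable def binH (p : ℝ) : ℝ :=
  -(p * Real.logb 2 p) - (1 - p) * Real.logb 2 (1 - p)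


namespace SymInfo

/-- Numeric value of a bit string, least significant bit first. -/
def val (l : BStr) : ℕ := l.foldr (fun b n => Nat.bit b n) 0

theorem val_bits (n : ℕ) : val (Nat.bits n) = n := by
  induction n using Nat.binaryRec' with
  | zero => simp [val]
  | bit b n h ih =>
    rw [Nat.bits_append_bit _ _ h]
    simp only [val, List.foldr_cons] at ih ⊢
    rw [ih]

theorem val_computable : Computable val := by
  have hb : Primrec (fun q : BStr × (Bool × ℕ) => Nat.bit q.2.1 q.2.2) := by
    have h : Primrec (fun q : BStr × (Bool × ℕ) => bif q.2.1 then 2 * q.2.2 + 1 else 2 * q.2.2) :=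
      Primrec.cond (Primrec.fst.comp Primrec.snd)
        (Primrec.succ.comp (Primrec.nat_mul.comp (Primrec.const 2) (Primrec.snd.comp Primrec.snd)))
        (Primrec.nat_mul.comp (Primrec.const 2) (Primrec.snd.comp Primrec.snd))
    exact h.of_eq fun q => by cases q.2.1 <;> simp [Nat.bit]
  exact (Primrec.list_foldr (f := fun l : BStr => l) (g := fun _ => 0)
    (h := fun _ (q : Bool × ℕ) => Nat.bit q.1 q.2) Primrec.id (Primrec.const 0) hb).to_comp

/-- Self-delimiting prefix: `1^m 0 b` where `m = |b|`. -/
def sd (b r : BStr) : BStr := List.replicate b.length true ++ (false :: (b ++ r))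

theorem sd_length (b r : BStr) : (sd b r).length = 2 * b.length + 1 + r.length := by
  simp [sd]; omega

def sdFst (s : BStr) : BStr := (s.drop (s.idxOf false + 1)).take (s.idxOf false)
def sdSnd (s : BStr) : BStr := (s.drop (s.idxOf false + 1)).drop (s.idxOf false)

theorem sd_idx (b r : BStr) : (sd b r).idxOf false = b.length := by
  unfold sd
  rw [List.idxOf_append_of_notMem]
  · simp
  · simp

theorem sd_drop (b r : BStr) : (sd b r).drop (b.length + 1) = b ++ r := by
  unfold sd
  rw [List.drop_append]
  simp

theorem sdFst_sd (b r : BStr) : sdFst (sd b r) = b := by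
  simp [sdFst, sd_idx, sd_drop]

theorem sdSnd_sd (b r : BStr) : sdSnd (sd b r) = r := by
  simp [sdSnd, sd_idx, sd_drop]

theorem idx_primrec : Primrec (fun s : BStr => s.idxOf false) :=
  (Primrec.list_idxOf (α := Bool)).comp (Primrec.const false) Primrec.id

theorem sdFst_computable : Computable sdFst :=
  (Primrec.list_take.comp idx_primrec
    (Primrec.list_drop.comp (Primrec.succ.comp idx_primrec) Primrec.id)).to_comp

theorem sdSnd_computable : Computable sdSnd :=
  (Primrec.list_drop.comp idx_primrec
    (Primrec.list_drop.comp (Primrec.succ.comp idx_primrec) Primrec.id)).to_comp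

section Enum
variable {α : Type} [Primcodable α]

/-- One step of the duplicate-free enumeration. -/
def stepL (o : Option BStr) (l : List BStr) : List BStr :=
  Option.casesOn (motive := fun _ => List BStr) o l
    (fun v => if @List.idxOf BStr instBEqOfDecidableEq v l < l.length then l else l ++ [v])

/-- The list enumerated by `f a` up to stage `s`, without duplicates. -/
def enumL (f : α → ℕ → Option BStr) (a : α) (s : ℕ) : List BStr :=
  Nat.rec (motive := fun _ => List BStr) [] (fun s l => stepL (f a s) l) s

theorem enumL_computable {f : α → ℕ → Option BStr} (hf : Computable₂ f) :
    Computable₂ (enumL f) := by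
  have hstep : Computable₂ stepL := by
    have h2 : Computable₂ (fun (q : Option BStr × List BStr) (v : BStr) =>
        if @List.idxOf BStr instBEqOfDecidableEq v q.2 < q.2.length then q.2 else q.2 ++ [v]) := by
      have : Primrec (fun (z : (Option BStr × List BStr) × BStr) =>
          if @List.idxOf BStr instBEqOfDecidableEq z.2 z.1.2 < z.1.2.length then z.1.2 else z.1.2 ++ [z.2]) := by
        have hl : Primrec (fun (z : (Option BStr × List BStr) × BStr) => z.1.2) :=
          Primrec.snd.comp Primrec.fst
        exact Primrec.ite
          (Primrec.nat_lt.comp ((Primrec.list_idxOf (α := BStr)).comp Primrec.snd hl)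
            (Primrec.list_length.comp hl))
          hl (Primrec.list_concat.comp hl Primrec.snd)
      exact this.to_comp
    exact Computable.option_casesOn Computable.fst Computable.snd h2
  exact Computable.nat_rec (f := fun q : α × ℕ => q.2) (g := fun _ => ([] : List BStr))
    (h := fun (q : α × ℕ) (z : ℕ × List BStr) => stepL (f q.1 z.1) z.2)
    Computable.snd (Computable.const [])
    (hstep.comp (hf.comp (Computable.fst.comp Computable.fst) (Computable.fst.comp Computable.snd))
      (Computable.snd.comp Computable.snd))

theorem enumL_succ (f : α → ℕ → Option BStr) (a : α) (s : ℕ) :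
    enumL f a (s+1) = stepL (f a s) (enumL f a s) := rfl

theorem stepL_none (l : List BStr) : stepL none l = l := rfl
theorem stepL_some (v : BStr) (l : List BStr) :
    stepL (some v) l = if v ∈ l then l else l ++ [v] := by
  simp [stepL, List.idxOf_lt_length_iff]

theorem enumL_prefix_succ (f : α → ℕ → Option BStr) (a : α) (s : ℕ) :
    enumL f a s <+: enumL f a (s+1) := by
  rw [enumL_succ]
  cases f a s with
  | none => exact List.prefix_rfl
  | some v => rw [stepL_some]; split_ifs; exacts [List.prefix_rfl, List.prefix_append _ _]

theorem enumL_prefix (f : α → ℕ → Option BStr) (a : α) {s t : ℕ} (h : s ≤ t) :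
    enumL f a s <+: enumL f a t := by
  induction h with
  | refl => exact List.prefix_rfl
  | step _ ih => exact ih.trans (enumL_prefix_succ f a _)

theorem enumL_nodup (f : α → ℕ → Option BStr) (a : α) (s : ℕ) : (enumL f a s).Nodup := by
  induction s with
  | zero => exact List.nodup_nil
  | succ s ih =>
    rw [enumL_succ]
    cases f a s with
    | none => exact ih
    | some v =>
      rw [stepL_some]
      split_ifs with h
      · exact ih
      · rw [List.nodup_append]
        refine ⟨ih, by simp, ?_⟩
        intro x hx y hy
        simp at hy
        subst hy
        rintro rfl
        exact h hx

theorem mem_enumL (f : α → ℕ → Option BStr) (a : α) (s : ℕ) (v : BStr) :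
    v ∈ enumL f a s ↔ ∃ t < s, f a t = some v := by
  induction s with
  | zero => simp [enumL]
  | succ s ih =>
    have key : v ∈ enumL f a (s+1) ↔ v ∈ enumL f a s ∨ f a s = some v := by
      rw [enumL_succ]
      cases f a s with
      | none => simp [stepL_none]
      | some w =>
        rw [stepL_some]
        split_ifs with h
        · constructor
          · exact Or.inl
          · rintro (h' | h')
            · exact h'
            · cases h'; exact h
        · simp [eq_comm]
    rw [key, ih]
    constructor
    · rintro (⟨t, ht, h⟩ | h)
      · exact ⟨t, by omega, h⟩
      · exact ⟨s, by omega, h⟩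
    · rintro ⟨t, ht, h⟩
      rcases Nat.lt_succ_iff_lt_or_eq.1 ht with h' | rfl
      · exact Or.inl ⟨t, h', h⟩
      · exact Or.inr h

/-- The set enumerated by `f a`. -/
def enumS (f : α → ℕ → Option BStr) (a : α) : Set BStr := {v | ∃ s, f a s = some v}

/-- The `i`-th element of the enumeration. -/
def nth (f : α → ℕ → Option BStr) (a : α) (i : ℕ) : Part BStr :=
  Nat.rfindOpt (fun s => (enumL f a s)[i]?)

theorem nth_partrec {f : α → ℕ → Option BStr} (hf : Computable₂ f) : Partrec₂ (nth f) := by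
  refine Partrec.rfindOpt (f := fun (q : α × ℕ) s => (enumL f q.1 s)[q.2]?) ?_
  exact Computable.list_getElem?.comp
    ((enumL_computable hf).comp (Computable.fst.comp Computable.fst) Computable.snd)
    (Computable.snd.comp Computable.fst)

theorem enumL_length_le {f : α → ℕ → Option BStr} {a : α} (hfin : (enumS f a).Finite) (s : ℕ) :
    (enumL f a s).length ≤ (enumS f a).ncard := by
  rw [← List.toFinset_card_of_nodup (enumL_nodup f a s), ← Set.ncard_coe_finset]
  refine Set.ncard_le_ncard ?_ hfin
  intro v hv
  simp only [List.coe_toFinset, Set.mem_ofPred_eq, mem_enumL] at hv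
  obtain ⟨t, _, h⟩ := hv
  exact ⟨t, h⟩

theorem exists_nth {f : α → ℕ → Option BStr} {a : α} (hfin : (enumS f a).Finite)
    {v : BStr} (hv : v ∈ enumS f a) : ∃ i < (enumS f a).ncard, v ∈ nth f a i := by
  obtain ⟨s, hs⟩ := hv
  have hm : v ∈ enumL f a (s+1) := (mem_enumL f a _ v).2 ⟨s, by omega, hs⟩
  obtain ⟨i, hi, he⟩ := List.getElem_of_mem hm
  refine ⟨i, hi.trans_le (enumL_length_le hfin _), ?_⟩
  refine (Nat.rfindOpt_mono ?_).2 ⟨s+1, ?_⟩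
  · intro b m n hmn hb
    have hb' : (enumL f a m)[i]? = some b := hb
    obtain ⟨hlt, e⟩ := List.getElem?_eq_some_iff.1 hb'
    obtain ⟨w, hw⟩ := enumL_prefix f a hmn
    show (enumL f a n)[i]? = some b
    rw [← hw, List.getElem?_append_left hlt, hb']
  · show (enumL f a (s+1))[i]? = some v
    rw [List.getElem?_eq_getElem hi, he]

/-- Some stage lists everything. -/
theorem exists_stage {f : α → ℕ → Option BStr} {a : α} (hfin : (enumS f a).Finite) :
    ∃ s, (enumL f a s).length = (enumS f a).ncard := by
  have hall : ∀ T : Finset BStr, (T : Set BStr) ⊆ enumS f a →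
      ∃ s, ∀ v ∈ T, v ∈ enumL f a s := by
    intro T
    induction T using Finset.induction_on with
    | empty => intro _; exact ⟨0, by simp⟩
    | insert v T _ ih =>
      intro h
      obtain ⟨s, hs⟩ := ih fun w hw => h (by simp at hw ⊢; exact Or.inr hw)
      obtain ⟨t, ht⟩ : v ∈ enumS f a := h (by simp)
      refine ⟨max s (t+1), fun w hw => ?_⟩
      rcases Finset.mem_insert.1 hw with rfl | hw
      · exact (mem_enumL ..).2 ⟨t, by omega, ht⟩
      · exact (enumL_prefix f a (le_max_left _ _)).subset (hs w hw)
  obtain ⟨s, hs⟩ := hall hfin.toFinset (by simp)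
  refine ⟨s, le_antisymm (enumL_length_le hfin s) ?_⟩
  rw [← List.toFinset_card_of_nodup (enumL_nodup f a s), Set.ncard_eq_toFinset_card _ hfin]
  exact Finset.card_le_card fun v hv => by simpa using hs v hv

end Enum

theorem iInf_attained (P : BStr → Prop) (h : (⨅ (p : BStr) (_ : P p), (p.length : ℕ∞)) ≠ ⊤) :
    ∃ p, P p ∧ p.length = (⨅ (p : BStr) (_ : P p), (p.length : ℕ∞)).toNat := by
  have hex : ∃ m p, P p ∧ p.length = m := by
    by_contra hno
    push Not at hno
    apply h
    refine iInf_eq_top.2 fun p => iInf_eq_top.2 fun hp => ?_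
    exact absurd rfl (hno p.length p hp)
  obtain ⟨p, hp, hl⟩ := Nat.find_spec hex
  refine ⟨p, hp, ?_⟩
  have : (⨅ (p : BStr) (_ : P p), (p.length : ℕ∞)) = (p.length : ℕ∞) := by
    refine le_antisymm (iInf₂_le p hp) (le_iInf₂ fun q hq => ?_)
    rw [hl]
    exact_mod_cast Nat.find_min' hex ⟨q, hq, rfl⟩
  rw [this]; rfl

theorem C_le {D : BStr →. BStr} (hD : OptimalDM D) {D' : BStr →. BStr} (h : Partrec D') :
    ∃ c : ℕ, ∀ p v, v ∈ D' p → C D v ≤ p.length + c := by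
  obtain ⟨c, hc⟩ := hD.2 D' h
  refine ⟨c, fun p v hv => ENat.toNat_le_of_le_natCast ?_⟩
  have h1 : Cw D' v ≤ p.length := iInf₂_le p hv
  push_cast
  exact (hc v).trans (by gcongr)

theorem C_wit {D : BStr →. BStr} (hD : OptimalDM D) (v : BStr) :
    ∃ p, v ∈ D p ∧ p.length = C D v := by
  refine iInf_attained (fun p => v ∈ D p) ?_
  obtain ⟨c, hc⟩ := hD.2 (fun p => Part.some p) Partrec.some
  have h1 : Cw (fun p => Part.some p) v ≤ v.length :=
    iInf₂_le (f := fun (p : BStr) (_ : v ∈ Part.some p) => (p.length : ℕ∞)) v (Part.mem_some v)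
  have h2 : Cw D v ≤ ((v.length + c : ℕ) : ℕ∞) := by
    push_cast
    exact (hc v).trans (by gcongr)
  exact ne_top_of_le_ne_top (ENat.coe_ne_top _) h2

theorem Ccond_le {E : BStr → BStr →. BStr} (hE : OptimalCDM E) {E' : BStr → BStr →. BStr}
    (h : Partrec₂ E') : ∃ c : ℕ, ∀ p v x, v ∈ E' p x → Ccond E v x ≤ p.length + c := by
  obtain ⟨c, hc⟩ := hE.2 E' h
  refine ⟨c, fun p v x hv => ENat.toNat_le_of_le_natCast ?_⟩
  have h1 : CwCond E' v x ≤ p.length := iInf₂_le p hv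
  push_cast
  exact (hc v x).trans (by gcongr)

theorem Ccond_wit {E : BStr → BStr →. BStr} (hE : OptimalCDM E) (v x : BStr) :
    ∃ p, v ∈ E p x ∧ p.length = Ccond E v x := by
  refine iInf_attained (fun p => v ∈ E p x) ?_
  have hp : Partrec₂ (fun (p _ : BStr) => Part.some p) :=
    (Computable.fst : Computable (fun q : BStr × BStr => q.1))
  obtain ⟨c, hc⟩ := hE.2 (fun p _ => Part.some p) hp
  have h1 : CwCond (fun p _ => Part.some p) v x ≤ v.length :=
    iInf₂_le (f := fun (p : BStr) (_ : v ∈ Part.some p) => (p.length : ℕ∞)) v (Part.mem_some v)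
  have h2 : CwCond E v x ≤ ((v.length + c : ℕ) : ℕ∞) := by
    push_cast
    exact (hc v x).trans (by gcongr)
  exact ne_top_of_le_ne_top (ENat.coe_ne_top _) h2

theorem val_concat_lt (p : BStr) : val (p ++ [true]) < 2 ^ (p.length + 1) := by
  induction p with
  | nil => simp [val]
  | cons b p ih =>
    have : val (b :: p ++ [true]) = Nat.bit b (val (p ++ [true])) := rfl
    rw [this, List.length_cons, pow_succ]
    cases b <;> simp [Nat.bit] <;> omega

theorem val_concat_pos (p : BStr) : 0 < val (p ++ [true]) := by
  induction p with
  | nil => simp [val]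
  | cons b p ih =>
    have : val (b :: p ++ [true]) = Nat.bit b (val (p ++ [true])) := rfl
    rw [this]
    cases b <;> simp [Nat.bit] <;> omega

theorem val_concat_inj {p q : BStr} (h : val (p ++ [true]) = val (q ++ [true])) : p = q := by
  induction p generalizing q with
  | nil =>
    cases q with
    | nil => rfl
    | cons b q =>
      exfalso
      have h1 : val (b :: q ++ [true]) = Nat.bit b (val (q ++ [true])) := rfl
      have h2 : val ([] ++ [true]) = 1 := rfl
      have := val_concat_pos q
      rw [h1, h2] at h
      cases b <;> simp [Nat.bit] at h <;> omega
  | cons a p ih =>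
    have h0 : val (a :: p ++ [true]) = Nat.bit a (val (p ++ [true])) := rfl
    cases q with
    | nil =>
      exfalso
      have h2 : val ([] ++ [true]) = 1 := rfl
      have := val_concat_pos p
      rw [h0, h2] at h
      cases a <;> simp [Nat.bit] at h <;> omega
    | cons b q =>
      have h1 : val (b :: q ++ [true]) = Nat.bit b (val (q ++ [true])) := rfl
      rw [h0, h1] at h
      have : a = b ∧ val (p ++ [true]) = val (q ++ [true]) := by
        cases a <;> cases b <;> simp [Nat.bit] at h ⊢ <;> omega
      rw [this.1, ih this.2]

section Main
variable (D : BStr →. BStr) (pair : BStr → BStr → BStr)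

/-- Pairs of complexity at most `n`. -/
def setA (n : ℕ) : Set (BStr × BStr) := {q | ∃ p : BStr, p.length ≤ n ∧ pair q.1 q.2 ∈ D p}

theorem setA_card (hpi : Function.Injective fun q : BStr × BStr => pair q.1 q.2) (n : ℕ) :
    (setA D pair n).Finite ∧ (setA D pair n).ncard ≤ 2 ^ (n + 1) := by
  have hch : ∀ q : BStr × BStr, ∃ p : BStr, q ∈ setA D pair n →
      p.length ≤ n ∧ pair q.1 q.2 ∈ D p := by
    intro q
    by_cases h : q ∈ setA D pair n
    · obtain ⟨p, hp⟩ := h; exact ⟨p, fun _ => hp⟩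
    · exact ⟨[], fun h' => absurd h' h⟩
  choose g hg using hch
  have hmap : ∀ q ∈ setA D pair n,
      val (g q ++ [true]) ∈ (↑(Finset.range (2 ^ (n + 1))) : Set ℕ) := by
    intro q hq
    have h1 := val_concat_lt (g q)
    have h2 : 2 ^ ((g q).length + 1) ≤ 2 ^ (n + 1) :=
      Nat.pow_le_pow_right (by norm_num) (by have := (hg q hq).1; omega)
    simp only [Finset.coe_range, Set.mem_Iio]
    omega
  have hinj : Set.InjOn (fun q => val (g q ++ [true])) (setA D pair n) := by
    intro q hq r hr h
    have h1 := val_concat_inj h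
    have h2 := (hg q hq).2
    rw [h1] at h2
    exact hpi (Part.mem_unique h2 (hg r hr).2)
  refine ⟨Set.Finite.of_injOn hmap hinj (Finset.finite_toSet _), ?_⟩
  have := Set.ncard_le_ncard_of_injOn _ hmap hinj (Finset.finite_toSet _)
  rwa [Set.ncard_coe_finset, Finset.card_range] at this

open Nat.Partrec (Code)

/-- Enumerates `y` with `(x,y)` in `setA n`; the parameter is `(n,x)`. -/
def f1 (c : Code) (a : ℕ × BStr) (s : ℕ) : Option BStr :=
  (Encodable.decode (α := ℕ × BStr × BStr) s).bind fun z =>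
    bif (decide (z.2.1.length ≤ a.1) &&
      decide (Code.evaln z.1 c (Encodable.encode z.2.1) =
        some (Encodable.encode (pair a.2 z.2.2)))) then some z.2.2 else none

set_option maxHeartbeats 2000000 in
theorem f1_computable (hpc : Computable₂ pair) (c : Code) : Computable₂ (f1 pair c) := by
  refine Computable.option_bind (Computable.decode.comp Computable.snd) ?_
  have hz : Computable (fun w : ((ℕ × BStr) × ℕ) × (ℕ × BStr × BStr) => w.2) := Computable.snd
  have ha : Computable (fun w : ((ℕ × BStr) × ℕ) × (ℕ × BStr × BStr) => w.1.1) :=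
    Computable.fst.comp Computable.fst
  have hp : Computable (fun w : ((ℕ × BStr) × ℕ) × (ℕ × BStr × BStr) => w.2.2.1) :=
    Computable.fst.comp (Computable.snd.comp hz)
  have hy : Computable (fun w : ((ℕ × BStr) × ℕ) × (ℕ × BStr × BStr) => w.2.2.2) :=
    Computable.snd.comp (Computable.snd.comp hz)
  refine Computable.cond ?_ (Computable.option_some.comp hy) (Computable.const none)
  have hle : Computable₂ (fun a b : ℕ => decide (a ≤ b)) :=
    (PrimrecRel.decide Primrec.nat_le).to_comp
  have heq : Computable₂ (fun a b : Option ℕ => decide (a = b)) :=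
    (PrimrecRel.decide (Primrec.eq (α := Option ℕ))).to_comp
  have hev : Computable (fun w : ((ℕ × BStr) × ℕ) × (ℕ × BStr × BStr) =>
      Code.evaln w.2.1 c (Encodable.encode w.2.2.1)) :=
    Code.primrec_evaln.to_comp.comp
      (((Computable.fst.comp hz).pair (Computable.const c)).pair (Computable.encode.comp hp))
  have hen : Computable (fun w : ((ℕ × BStr) × ℕ) × (ℕ × BStr × BStr) =>
      some (Encodable.encode (pair w.1.1.2 w.2.2.2))) :=
    Computable.option_some.comp
      (Computable.encode.comp (hpc.comp (Computable.snd.comp ha) hy))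
  have hb1 : Computable (fun w : ((ℕ × BStr) × ℕ) × (ℕ × BStr × BStr) =>
      decide (w.2.2.1.length ≤ w.1.1.1)) :=
    hle.comp (Computable.list_length.comp hp) (Computable.fst.comp ha)
  have hb2 : Computable (fun w : ((ℕ × BStr) × ℕ) × (ℕ × BStr × BStr) =>
      decide (Code.evaln w.2.1 c (Encodable.encode w.2.2.1) =
        some (Encodable.encode (pair w.1.1.2 w.2.2.2)))) := heq.comp hev hen
  exact Primrec.and.to_comp.comp hb1 hb2

theorem enumS_f1 {c : Code}
    (hc : Code.eval c = fun n => Part.bind (Encodable.decode (α := BStr) n)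
      fun a => (D a).map Encodable.encode) (n : ℕ) (x : BStr) :
    enumS (f1 pair c) (n, x) = {y | (x, y) ∈ setA D pair n} := by
  have key : ∀ p w : BStr, w ∈ D p ↔
      ∃ t, Code.evaln t c (Encodable.encode p) = some (Encodable.encode w) := by
    intro p w
    have h := Code.evaln_complete (c := c) (n := Encodable.encode p) (x := Encodable.encode w)
    rw [hc] at h
    simp only [Encodable.encodek, Part.coe_some, Part.bind_some, Part.mem_map_iff,
      Option.mem_def, Encodable.encode_inj, exists_eq_right] at h
    exact h
  ext y
  constructor
  · rintro ⟨s, hs⟩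
    unfold f1 at hs
    obtain ⟨z, _, h⟩ := Option.bind_eq_some_iff.1 hs
    rw [Bool.cond_eq_ite] at h
    split_ifs at h with h'
    simp only [Bool.and_eq_true, decide_eq_true_eq] at h'
    cases h
    exact ⟨z.2.1, h'.1, (key _ _).2 ⟨_, h'.2⟩⟩
  · rintro ⟨p, hp, hm⟩
    obtain ⟨t, ht⟩ := (key _ _).1 hm
    refine ⟨Encodable.encode (t, p, y), ?_⟩
    simp only at hp ht
    simp [f1, hp, ht]

/-- Enumerates `x` with at least `2^k` sections; the parameter is `(n,k)`. -/
def f2 (c : Code) (a : ℕ × ℕ) (s : ℕ) : Option BStr :=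
  (Encodable.decode (α := ℕ × BStr) s).bind fun z =>
    bif decide (2 ^ a.2 ≤ (enumL (f1 pair c) (a.1, z.2) z.1).length) then some z.2 else none

theorem f2_computable (hpc : Computable₂ pair) (c : Code) : Computable₂ (f2 pair c) := by
  refine Computable.option_bind (Computable.decode.comp Computable.snd) ?_
  have hz : Computable (fun w : ((ℕ × ℕ) × ℕ) × (ℕ × BStr) => w.2) := Computable.snd
  have ha : Computable (fun w : ((ℕ × ℕ) × ℕ) × (ℕ × BStr) => w.1.1) :=
    Computable.fst.comp Computable.fst
  have hpow : Primrec₂ (fun a b : ℕ => a ^ b) := Primrec₂.unpaired'.1 Nat.Primrec.pow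
  refine Computable.cond ?_ (Computable.option_some.comp (Computable.snd.comp hz))
    (Computable.const none)
  refine (PrimrecRel.decide Primrec.nat_le).to_comp.comp
    (hpow.to_comp.comp (Computable.const 2) (Computable.snd.comp ha)) ?_
  exact Computable.list_length.comp ((enumL_computable (f1_computable pair hpc c)).comp
    ((Computable.fst.comp ha).pair (Computable.snd.comp hz)) (Computable.fst.comp hz))

theorem f1_fin (hpi : Function.Injective fun q : BStr × BStr => pair q.1 q.2) {c : Code}
    (hc : Code.eval c = fun n => Part.bind (Encodable.decode (α := BStr) n)
      fun a => (D a).map Encodable.encode) (n : ℕ) (x : BStr) :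
    (enumS (f1 pair c) (n, x)).Finite ∧ (enumS (f1 pair c) (n, x)).ncard ≤ 2 ^ (n + 1) := by
  rw [enumS_f1 D pair hc]
  obtain ⟨h1, h2⟩ := setA_card D pair hpi n
  have hinj : Set.InjOn (fun y => (x, y)) {y | (x, y) ∈ setA D pair n} := by
    intro y _ z _ h
    exact (Prod.mk.inj h).2
  have hm : ∀ y ∈ {y | (x, y) ∈ setA D pair n}, (x, y) ∈ setA D pair n := fun y hy => hy
  exact ⟨Set.Finite.of_injOn hm hinj h1, (Set.ncard_le_ncard_of_injOn _ hm hinj h1).trans h2⟩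

theorem enumS_f2 (hpi : Function.Injective fun q : BStr × BStr => pair q.1 q.2) {c : Code}
    (hc : Code.eval c = fun n => Part.bind (Encodable.decode (α := BStr) n)
      fun a => (D a).map Encodable.encode) (n k : ℕ) :
    enumS (f2 pair c) (n, k) = {x | 2 ^ k ≤ (enumS (f1 pair c) (n, x)).ncard} := by
  ext x
  have hfin := (f1_fin D pair hpi hc n x).1
  constructor
  · rintro ⟨s, hs⟩
    unfold f2 at hs
    obtain ⟨z, _, h⟩ := Option.bind_eq_some_iff.1 hs
    rw [Bool.cond_eq_ite] at h
    split_ifs at h with h'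
    simp only [decide_eq_true_eq] at h'
    cases h
    exact h'.trans (enumL_length_le hfin _)
  · intro h
    obtain ⟨t, ht⟩ := exists_stage hfin
    refine ⟨Encodable.encode (t, x), ?_⟩
    have h' : 2 ^ k ≤ (enumL (f1 pair c) (n, x) t).length := by rw [ht]; exact h
    simp [f2, h']

theorem f2_fin (hpi : Function.Injective fun q : BStr × BStr => pair q.1 q.2) {c : Code}
    (hc : Code.eval c = fun n => Part.bind (Encodable.decode (α := BStr) n)
      fun a => (D a).map Encodable.encode) (n k : ℕ) :
    (enumS (f2 pair c) (n, k)).Finite ∧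
      2 ^ k * (enumS (f2 pair c) (n, k)).ncard ≤ 2 ^ (n + 1) := by
  obtain ⟨hA, hA2⟩ := setA_card D pair hpi n
  have hfin : (enumS (f2 pair c) (n, k)).Finite := by
    refine (hA.image Prod.fst).subset ?_
    intro x hx
    rw [enumS_f2 D pair hpi hc] at hx
    have hx' : 2 ^ k ≤ (enumS (f1 pair c) (n, x)).ncard := hx
    have hpos : 0 < (enumS (f1 pair c) (n, x)).ncard := lt_of_lt_of_le (by positivity) hx'
    obtain ⟨y, hy⟩ := Set.nonempty_of_ncard_ne_zero hpos.ne'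
    rw [enumS_f1 D pair hc] at hy
    exact ⟨(x, y), hy, rfl⟩
  refine ⟨hfin, le_trans ?_ hA2⟩
  rw [Set.ncard_eq_toFinset_card _ hfin, Set.ncard_eq_toFinset_card _ hA]
  refine (Finset.mul_card_image_le_card_of_maps_to (f := Prod.fst)
    (s := hA.toFinset.filter (fun q => q.1 ∈ hfin.toFinset)) ?_ _ ?_).trans
      (Finset.card_filter_le _ _)
  · intro q hq
    exact (Finset.mem_filter.1 hq).2
  · intro x hx
    have hx1 := hx
    rw [Set.Finite.mem_toFinset, enumS_f2 D pair hpi hc] at hx1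
    have hx2 : 2 ^ k ≤ (enumS (f1 pair c) (n, x)).ncard := hx1
    refine hx2.trans ?_
    rw [← Set.ncard_coe_finset]
    refine Set.ncard_le_ncard_of_injOn (fun y => (x, y)) ?_ ?_ (Finset.finite_toSet _)
    · intro y hy
      rw [enumS_f1 D pair hc] at hy
      have hy' : (x, y) ∈ setA D pair n := hy
      simp only [Finset.coe_filter, Finset.mem_filter, Set.Finite.mem_toFinset, Set.mem_ofPred_eq]
      exact ⟨⟨hy', by simpa using hx⟩, trivial⟩
    · intro y _ z _ h
      exact (Prod.mk.inj h).2

end Main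

theorem exists_code_of_partrec {D : BStr →. BStr} (h : Partrec D) :
    ∃ c : Nat.Partrec.Code, Nat.Partrec.Code.eval c =
      fun n => Part.bind (Encodable.decode (α := BStr) n) fun a => (D a).map Encodable.encode :=
  Nat.Partrec.Code.exists_code.1 h

theorem size_bits_le {i m : ℕ} (h : i < 2 ^ m) : (Nat.bits i).length ≤ m := by
  rw [Nat.size_eq_bits_len]; exact Nat.size_le.2 h

theorem hard_dir (D : BStr →. BStr) (hD : OptimalDM D)
    (E : BStr → BStr →. BStr) (hE : OptimalCDM E)
    (pair : BStr → BStr → BStr) (hpc : Computable₂ pair)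
    (hpi : Function.Injective fun q : BStr × BStr => pair q.1 q.2) :
    ∃ c : ℕ, ∀ x y : BStr, C D x + Ccond E y x ≤
      C D (pair x y) + 6 * Nat.size (C D (pair x y) + 1) + c := by
  obtain ⟨c, hc⟩ := exists_code_of_partrec hD.1
  have hv1 : Computable (fun s : BStr => val (sdFst s)) := val_computable.comp sdFst_computable
  have hE' : Partrec₂ (fun s x : BStr => nth (f1 pair c) (val (sdFst s), x) (val (sdSnd s))) :=
    (nth_partrec (f1_computable pair hpc c)).comp
      ((hv1.comp Computable.fst).pair Computable.snd)
      ((val_computable.comp sdSnd_computable).comp Computable.fst)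
  have hD' : Partrec (fun s : BStr => nth (f2 pair c) (val (sdFst s), val (sdFst (sdSnd s)))
      (val (sdSnd (sdSnd s)))) :=
    (nth_partrec (f2_computable pair hpc c)).comp
      (hv1.pair (hv1.comp sdSnd_computable))
      (val_computable.comp (sdSnd_computable.comp sdSnd_computable))
  obtain ⟨c1, h1⟩ := Ccond_le hE hE'
  obtain ⟨c2, h2⟩ := C_le hD hD'
  refine ⟨c1 + c2 + 10, fun x y => ?_⟩
  set n := C D (pair x y) with hn
  obtain ⟨hfin, hcard⟩ := f1_fin D pair hpi hc n x
  have hy : y ∈ enumS (f1 pair c) (n, x) := by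
    rw [enumS_f1 D pair hc]
    obtain ⟨p, hp, hl⟩ := C_wit hD (pair x y)
    exact ⟨p, hl.le, hp⟩
  obtain ⟨i, hi, hyi⟩ := exists_nth hfin hy
  set N := (enumS (f1 pair c) (n, x)).ncard with hN
  have hN0 : N ≠ 0 := by omega
  set k := Nat.log 2 N with hk
  have hk1 : 2 ^ k ≤ N := Nat.pow_log_le_self 2 hN0
  have hk2 : N < 2 ^ (k + 1) := Nat.lt_pow_succ_log_self (by norm_num) N
  have hkn : k ≤ n + 1 := (Nat.pow_le_pow_iff_right (by norm_num)).1 (hk1.trans hcard)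
  have b1 : Ccond E y x ≤ 2 * Nat.size n + 1 + (k + 1) + c1 := by
    have := h1 (sd (Nat.bits n) (Nat.bits i)) y x (by
      simpa only [sdFst_sd, sdSnd_sd, val_bits] using hyi)
    rw [sd_length, Nat.size_eq_bits_len] at this
    have := size_bits_le (hi.trans hk2)
    omega
  have hx : x ∈ enumS (f2 pair c) (n, k) := by
    rw [enumS_f2 D pair hpi hc]; exact hk1
  obtain ⟨hfin2, hcard2⟩ := f2_fin D pair hpi hc n k
  obtain ⟨j, hj, hxj⟩ := exists_nth hfin2 hx
  have hj2 : j < 2 ^ (n + 1 - k) := by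
    have e : 2 ^ (n + 1) = 2 ^ k * 2 ^ (n + 1 - k) := by
      rw [← pow_add]; congr 1; omega
    rw [e] at hcard2
    exact hj.trans_le (Nat.le_of_mul_le_mul_left hcard2 (by positivity))
  have b2 : C D x ≤ 2 * Nat.size n + 1 + (2 * Nat.size k + 1 + (n + 1 - k)) + c2 := by
    have := h2 (sd (Nat.bits n) (sd (Nat.bits k) (Nat.bits j))) x (by
      simpa only [sdFst_sd, sdSnd_sd, val_bits] using hxj)
    rw [sd_length, sd_length, Nat.size_eq_bits_len, Nat.size_eq_bits_len] at this
    have := size_bits_le hj2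
    omega
  have s1 : Nat.size n ≤ Nat.size (n + 1) := Nat.size_le_size (by omega)
  have s2 : Nat.size k ≤ Nat.size (n + 1) := Nat.size_le_size hkn
  omega

theorem easy_dir (D : BStr →. BStr) (hD : OptimalDM D)
    (E : BStr → BStr →. BStr) (hE : OptimalCDM E)
    (pair : BStr → BStr → BStr) (hpc : Computable₂ pair) :
    ∃ c : ℕ, ∀ x y : BStr, C D (pair x y) ≤
      C D x + Ccond E y x + 2 * Nat.size (C D x) + c := by
  have hn : Computable (fun s : BStr => val (sdFst s)) := val_computable.comp sdFst_computable
  have hp : Computable (fun s : BStr => (sdSnd s).take (val (sdFst s))) :=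
    Primrec.list_take.to_comp.comp hn sdSnd_computable
  have hq : Computable (fun s : BStr => (sdSnd s).drop (val (sdFst s))) :=
    Primrec.list_drop.to_comp.comp hn sdSnd_computable
  have hD' : Partrec (fun s : BStr => (D ((sdSnd s).take (val (sdFst s)))).bind fun x =>
      (E ((sdSnd s).drop (val (sdFst s))) x).map fun y => pair x y) := by
    refine Partrec.bind (hD.1.comp hp) ?_
    refine Partrec.map (hE.1.comp (hq.comp Computable.fst) Computable.snd) ?_
    exact hpc.comp (Computable.snd.comp Computable.fst) Computable.snd
  obtain ⟨c, h⟩ := C_le hD hD'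
  refine ⟨c + 1, fun x y => ?_⟩
  obtain ⟨p, hp1, hp2⟩ := C_wit hD x
  obtain ⟨q, hq1, hq2⟩ := Ccond_wit hE y x
  have := h (sd (Nat.bits p.length) (p ++ q)) (pair x y) (by
    simp only [sdFst_sd, sdSnd_sd, val_bits, List.take_left, List.drop_left]
    exact Part.mem_bind hp1 (Part.mem_map _ hq1))
  rw [sd_length, Nat.size_eq_bits_len, List.length_append, hp2, hq2] at this
  omega

theorem size_le_logb (m : ℕ) : (Nat.size m : ℝ) ≤ Real.logb 2 ((m : ℝ) + 1) + 1 := by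
  rcases Nat.eq_zero_or_pos m with rfl | hm
  · simp
  · have hs : 0 < Nat.size m := Nat.size_pos.2 hm
    have h1 : 2 ^ (Nat.size m - 1) ≤ m := Nat.lt_size.1 (by omega)
    have h2 : ((Nat.size m - 1 : ℕ) : ℝ) ≤ Real.logb 2 ((m : ℝ) + 1) := by
      rw [Real.le_logb_iff_rpow_le (by norm_num) (by positivity), Real.rpow_natCast]
      have : ((2 ^ (Nat.size m - 1) : ℕ) : ℝ) ≤ m := by exact_mod_cast h1
      push_cast at this
      linarith
    have h3 : (Nat.size m : ℝ) = ((Nat.size m - 1 : ℕ) : ℝ) + 1 := by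
      have : Nat.size m = (Nat.size m - 1) + 1 := by omega
      exact_mod_cast this
    linarith

end SymInfo

/-- **Kolmogorov–Levin symmetry of information**:
`C(x,y) = C(x) + C(y|x)` with precision `O(log C(x,y))`. -/
theorem stmt9 (D : BStr →. BStr) (hD : OptimalDM D)
    (E : BStr → BStr →. BStr) (hE : OptimalCDM E)
    (pair : BStr → BStr → BStr) (hpc : Computable₂ pair)
    (hpi : Function.Injective fun q : BStr × BStr => pair q.1 q.2) :
    ∃ c : ℝ, ∀ x y : BStr,
      |(C D (pair x y) : ℝ) - ((C D x : ℝ) + (Ccond E y x : ℝ))|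
        ≤ c * Real.logb 2 ((C D (pair x y) : ℝ) + 2) := by
  obtain ⟨c1, h1⟩ := SymInfo.hard_dir D hD E hE pair hpc hpi
  obtain ⟨c2, h2⟩ := SymInfo.easy_dir D hD E hE pair hpc
  refine ⟨c1 + c2 + 2 * Real.logb 2 (c1 + 20) + 24, fun x y => ?_⟩
  have e1 := h1 x y
  have e2 := h2 x y
  set n := C D (pair x y)
  set a := C D x
  set b := Ccond E y x
  set L := Real.logb 2 ((n : ℝ) + 2) with hL
  have hn0 : (0 : ℝ) ≤ n := Nat.cast_nonneg n
  have hc0 : (0 : ℝ) ≤ c1 := Nat.cast_nonneg c1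
  have hc0' : (0 : ℝ) ≤ c2 := Nat.cast_nonneg c2
  have hL1 : 1 ≤ L := by
    rw [hL, Real.le_logb_iff_rpow_le (by norm_num) (by positivity)]
    simp
  have hK : 0 ≤ Real.logb 2 ((c1 : ℝ) + 20) := Real.logb_nonneg (by norm_num) (by linarith)
  have s1 : (Nat.size (n + 1) : ℝ) ≤ L + 1 := by
    have := SymInfo.size_le_logb (n + 1)
    push_cast at this
    rw [hL]
    convert this using 3
    ring
  have s1' : Nat.size (n + 1) ≤ n + 1 := Nat.size_le.2 Nat.lt_two_pow_self
  have ha : a + 1 ≤ (c1 + 20) * (n + 2) := by nlinarith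
  have s2 : (Nat.size a : ℝ) ≤ Real.logb 2 ((c1 : ℝ) + 20) + L + 1 := by
    have h := SymInfo.size_le_logb a
    have ha' : (a : ℝ) + 1 ≤ (c1 + 20) * (n + 2) := by exact_mod_cast ha
    have h3 : Real.logb 2 ((a : ℝ) + 1) ≤ Real.logb 2 (((c1 : ℝ) + 20) * (n + 2)) :=
      Real.logb_le_logb_of_le (by norm_num) (by positivity) ha'
    rw [Real.logb_mul (by positivity) (by positivity)] at h3
    linarith
  have e1' : (a : ℝ) + b ≤ n + 6 * Nat.size (n + 1) + c1 := by exact_mod_cast e1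
  have e2' : (n : ℝ) ≤ a + b + 2 * Nat.size a + c2 := by exact_mod_cast e2
  have m1 : (c1 : ℝ) ≤ c1 * L := le_mul_of_one_le_right hc0 hL1
  have m2 : (c2 : ℝ) ≤ c2 * L := le_mul_of_one_le_right hc0' hL1
  have m3 := le_mul_of_one_le_right hK hL1
  rw [abs_le]
  constructor <;> nlinarith
end

section
/- Define the mutual information I(x : y) = C(y) − C(y|x). There exists a constant c such that for all binary strings x and y: |I(x : y) − I(y : x)| ≤ c·log(C(x, y) + 2). (Symmetry of algorithmic mutual information with logarithmic precision.) -/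
open scoped Classical

/-! ## Lists enumerated without repetition -/

/-- The list of distinct values among `f a 0, …, f a (t-1)`, in order of appearance. -/
def enumL {α β : Type} [DecidableEq β] (f : α → ℕ → Option β) (a : α) (t : ℕ) : List β :=
  Nat.rec [] (fun s l => (f a s).elim l
    (fun z => bif decide (l.idxOf z < l.length) then l else l ++ [z])) t

theorem enumL_succ {α β : Type} [DecidableEq β] (f : α → ℕ → Option β) (a : α) (t : ℕ) :
    enumL f a (t + 1) = (f a t).elim (enumL f a t)
      (fun z => if z ∈ enumL f a t then enumL f a t else enumL f a t ++ [z]) := by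
  have h : enumL f a (t + 1) = (f a t).elim (enumL f a t)
    (fun z => bif decide ((enumL f a t).idxOf z < (enumL f a t).length) then enumL f a t
      else enumL f a t ++ [z]) := rfl
  rw [h]
  congr 1
  funext z
  simp [List.idxOf_lt_length_iff, cond_eq_ite]

theorem enumL_computable {α β : Type} [Primcodable α] [Primcodable β] [DecidableEq β]
    {f : α → ℕ → Option β} (hf : Computable₂ f) : Computable₂ (enumL f) := by
  have : Computable₂ (fun (q : α × ℕ) (sl : ℕ × List β) => (f q.1 sl.1).elim sl.2
      (fun z => bif decide (sl.2.idxOf z < sl.2.length) then sl.2 else sl.2 ++ [z])) := by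
    have h : Computable₂ (fun (r : (α × ℕ) × (ℕ × List β)) (z : β) =>
        bif decide (r.2.2.idxOf z < r.2.2.length) then r.2.2 else r.2.2 ++ [z]) := by
      have hl : Primrec (fun r : ((α × ℕ) × (ℕ × List β)) × β => r.1.2.2) :=
        Primrec.snd.comp (Primrec.snd.comp Primrec.fst)
      have hb : Primrec (fun r : ((α × ℕ) × (ℕ × List β)) × β =>
          decide (r.1.2.2.idxOf r.2 < r.1.2.2.length)) :=
        (Primrec.nat_lt.comp (Primrec.list_idxOf.comp Primrec.snd hl)
          (Primrec.list_length.comp hl)).decide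
      exact (Primrec.cond hb hl (Primrec.list_concat.comp hl Primrec.snd)).to_comp
    have h2 : Computable (fun r : (α × ℕ) × (ℕ × List β) => f r.1.1 r.2.1) :=
      hf.comp (Computable.fst.comp Computable.fst) (Computable.fst.comp Computable.snd)
    refine (Computable.option_casesOn h2 (Computable.snd.comp Computable.snd) h).of_eq ?_
    rintro ⟨⟨a, t⟩, s, l⟩
    simp only
    cases f a s <;> rfl
  exact Computable.nat_rec Computable.snd (Computable.const []) this

theorem enumL_prefix {α β : Type} [DecidableEq β] (f : α → ℕ → Option β) (a : α) {s t : ℕ}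
    (h : s ≤ t) : enumL f a s <+: enumL f a t := by
  induction h with
  | refl => exact List.prefix_rfl
  | step _ ih =>
    refine ih.trans ?_
    rw [Nat.succ_eq_add_one, enumL_succ]
    cases f a _ with
    | none => exact List.prefix_rfl
    | some z =>
      simp only [Option.elim]
      split
      · exact List.prefix_rfl
      · exact List.prefix_append _ _

theorem enumL_nodup {α β : Type} [DecidableEq β] (f : α → ℕ → Option β) (a : α) (t : ℕ) :
    (enumL f a t).Nodup := by
  induction t with
  | zero => exact List.nodup_nil
  | succ t ih =>
    rw [enumL_succ]
    cases f a t with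
    | none => exact ih
    | some z =>
      simp only [Option.elim]
      split
      · exact ih
      · rename_i h
        rw [List.nodup_append]
        refine ⟨ih, List.nodup_singleton z, ?_⟩
        rintro u hu v hv rfl
        simp only [List.mem_singleton] at hv
        exact h (hv ▸ hu)

theorem mem_enumL {α β : Type} [DecidableEq β] (f : α → ℕ → Option β) (a : α) (t : ℕ) (z : β) :
    z ∈ enumL f a t ↔ ∃ s < t, f a s = some z := by
  induction t with
  | zero => simp [enumL]
  | succ t ih =>
    have : (∃ s < t + 1, f a s = some z) ↔ (∃ s < t, f a s = some z) ∨ f a t = some z := by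
      constructor
      · rintro ⟨s, hs, h⟩
        rcases Nat.lt_succ_iff_lt_or_eq.1 hs with h' | rfl
        · exact Or.inl ⟨s, h', h⟩
        · exact Or.inr h
      · rintro (⟨s, hs, h⟩ | h)
        · exact ⟨s, by omega, h⟩
        · exact ⟨t, by omega, h⟩
    rw [this, enumL_succ, ← ih]
    cases f a t with
    | none => simp
    | some w =>
      simp only [Option.elim, Option.some.injEq]
      split
      · rename_i h
        constructor
        · exact Or.inl
        · rintro (h' | rfl)
          · exact h'
          · exact h
      · simp [eq_comm]

theorem enumL_length_le {α β : Type} [DecidableEq β] (f : α → ℕ → Option β) (a : α) (t : ℕ)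
    (S : Finset β) (hS : ∀ t z, f a t = some z → z ∈ S) : (enumL f a t).length ≤ S.card := by
  rw [← List.toFinset_card_of_nodup (enumL_nodup f a t)]
  refine Finset.card_le_card ?_
  intro z hz
  rw [List.mem_toFinset, mem_enumL] at hz
  obtain ⟨s, _, h⟩ := hz
  exact hS s z h

theorem enumL_exhaust {α β : Type} [DecidableEq β] (f : α → ℕ → Option β) (a : α)
    (S : Finset β) (hS : ∀ z ∈ S, ∃ t, f a t = some z) :
    ∃ T, S.card ≤ (enumL f a T).length := by
  have : ∃ T, ∀ z ∈ S, z ∈ enumL f a T := by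
    choose! τ hτ using hS
    refine ⟨S.sup τ + 1, fun z hz => ?_⟩
    rw [mem_enumL]
    exact ⟨τ z, Nat.lt_succ_of_le (Finset.le_sup hz), hτ z hz⟩
  obtain ⟨T, hT⟩ := this
  refine ⟨T, ?_⟩
  rw [← List.toFinset_card_of_nodup (enumL_nodup f a T)]
  exact Finset.card_le_card fun z hz => List.mem_toFinset.2 (hT z hz)

/-- The `i`-th distinct element in the enumeration `f a`. -/
def enumAt {α β : Type} [DecidableEq β] (f : α → ℕ → Option β) (a : α) (i : ℕ) : Part β :=
  Nat.rfindOpt fun t => (enumL f a t)[i]?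

theorem enumAt_partrec {α β : Type} [Primcodable α] [Primcodable β] [DecidableEq β]
    {f : α → ℕ → Option β} (hf : Computable₂ f) : Partrec₂ (enumAt f) := by
  refine Partrec.rfindOpt (f := fun (q : α × ℕ) t => (enumL f q.1 t)[q.2]?) ?_
  exact Computable.list_getElem?.comp
    ((enumL_computable hf).comp (Computable.fst.comp Computable.fst) Computable.snd)
    (Computable.snd.comp Computable.fst)

theorem exists_enumAt {α β : Type} [DecidableEq β] (f : α → ℕ → Option β) (a : α)
    (S : Finset β) (hS : ∀ t z, f a t = some z → z ∈ S) (z : β) (hz : ∃ t, f a t = some z) :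
    ∃ i < S.card, z ∈ enumAt f a i := by
  obtain ⟨t, ht⟩ := hz
  have hm : z ∈ enumL f a (t + 1) := (mem_enumL f a (t + 1) z).2 ⟨t, by omega, ht⟩
  obtain ⟨i, hi, hiz⟩ := List.getElem_of_mem hm
  refine ⟨i, hi.trans_le (enumL_length_le f a _ S hS), ?_⟩
  refine (Nat.rfindOpt_mono ?_).2 ⟨t + 1, ?_⟩
  · intro w m n hmn hw
    obtain ⟨r, hr⟩ := enumL_prefix f a hmn
    rw [Option.mem_def, List.getElem?_eq_some_iff] at hw
    obtain ⟨h1, h2⟩ := hw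
    rw [Option.mem_def, ← hr, List.getElem?_append_left h1, List.getElem?_eq_getElem h1, h2]
  · rw [Option.mem_def, List.getElem?_eq_getElem hi, hiz]

/-! ## Number codes and self-delimiting codes -/

/-- The number with the given binary digits. -/
def bval (s : BStr) : ℕ := s.foldr (fun b v => 2 * v + b.toNat) 0

theorem bval_primrec : Primrec bval := by
  refine Primrec.list_foldr (h := fun _ (q : Bool × ℕ) => 2 * q.2 + q.1.toNat)
    Primrec.id (Primrec.const 0) ?_
  refine (Primrec.nat_add.comp (Primrec.nat_mul.comp (Primrec.const 2)
    (Primrec.snd.comp Primrec.snd)) ?_)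
  exact (Primrec.dom_bool Bool.toNat).comp (Primrec.fst.comp Primrec.snd)

theorem exists_bval (k i : ℕ) (h : i < 2 ^ k) : ∃ s : BStr, s.length = k ∧ bval s = i := by
  induction k generalizing i with
  | zero => exact ⟨[], rfl, by simp at h; simp [bval, h]⟩
  | succ k ih =>
    obtain ⟨s, hs, hv⟩ := ih (i / 2) (by rw [pow_succ] at h; omega)
    refine ⟨decide (i % 2 = 1) :: s, by simp [hs], ?_⟩
    change 2 * bval s + (decide (i % 2 = 1)).toNat = i
    rw [hv]
    by_cases h2 : i % 2 = 1 <;> simp [h2] <;> omega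

/-- Self-delimiting code: unary length, then the string. -/
def sd (s : BStr) : BStr := List.replicate s.length true ++ false :: s

/-- First component of a string that starts with a self-delimiting code. -/
def sdFst (q : BStr) : BStr := (q.drop (q.idxOf false + 1)).take (q.idxOf false)

/-- The remainder of a string that starts with a self-delimiting code. -/
def sdSnd (q : BStr) : BStr := (q.drop (q.idxOf false + 1)).drop (q.idxOf false)

theorem idxOf_sd (s r : BStr) : (sd s ++ r).idxOf false = s.length := by
  unfold sd
  generalize s.length = n
  rw [List.append_assoc]
  induction n with
  | zero => simp
  | succ n ih => rw [List.replicate_succ]; simpa using ih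

theorem drop_sd (s r : BStr) : (sd s ++ r).drop (s.length + 1) = s ++ r := by
  unfold sd
  have : List.replicate s.length true ++ false :: s ++ r
    = (List.replicate s.length true ++ [false]) ++ (s ++ r) := by simp
  rw [this]
  exact List.drop_left' (by simp)

theorem sdFst_sd (s r : BStr) : sdFst (sd s ++ r) = s := by
  unfold sdFst; rw [idxOf_sd, drop_sd]; simp

theorem sdSnd_sd (s r : BStr) : sdSnd (sd s ++ r) = r := by
  unfold sdSnd; rw [idxOf_sd, drop_sd]; simp

theorem sd_length (s : BStr) : (sd s).length = 2 * s.length + 1 := by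
  simp [sd]; omega

theorem sdFst_primrec : Primrec sdFst := by
  have h : Primrec (fun q : BStr => q.idxOf false) :=
    Primrec.list_idxOf.comp (Primrec.const false) Primrec.id
  exact Primrec.list_take.comp h (Primrec.list_drop.comp (Primrec.succ.comp h) Primrec.id)

theorem sdSnd_primrec : Primrec sdSnd := by
  have h : Primrec (fun q : BStr => q.idxOf false) :=
    Primrec.list_idxOf.comp (Primrec.const false) Primrec.id
  exact Primrec.list_drop.comp h (Primrec.list_drop.comp (Primrec.succ.comp h) Primrec.id)

/-! ## Basic facts on complexities -/

theorem Cw_le (D : BStr →. BStr) {x p : BStr} (h : x ∈ D p) : Cw D x ≤ p.length :=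
  iInf₂_le p h

theorem CwCond_le (E : BStr → BStr →. BStr) {x y p : BStr} (h : x ∈ E p y) :
    CwCond E x y ≤ p.length :=
  iInf₂_le p h

theorem iInf_length_attained (P : BStr → Prop) (h : ∃ p, P p) :
    ∃ p, P p ∧ (⨅ (p : BStr) (_ : P p), (p.length : ℕ∞)) = p.length := by
  have h' : ∃ n, ∃ p, P p ∧ p.length = n := by
    obtain ⟨p, hp⟩ := h; exact ⟨_, p, hp, rfl⟩
  obtain ⟨p, hp, hl⟩ := Nat.find_spec h'
  refine ⟨p, hp, le_antisymm (iInf₂_le p hp) (le_iInf₂ fun q hq => ?_)⟩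
  rw [hl]
  exact_mod_cast Nat.find_min' h' ⟨q, hq, rfl⟩

theorem exists_program {D : BStr →. BStr} (hD : OptimalDM D) (x : BStr) :
    ∃ p, x ∈ D p ∧ C D x = p.length := by
  have h : ∃ p, x ∈ D p := by
    by_contra hn
    push Not at hn
    obtain ⟨c, hc⟩ := hD.2 (fun p => Part.some p) Computable.id
    have h1 := (hc x).trans (add_le_add_left
      (Cw_le (fun p => Part.some p) (Part.mem_some x)) _)
    have h2 : Cw D x = ⊤ := by simp [Cw, hn]
    rw [h2, top_le_iff] at h1
    exact absurd h1 (by exact_mod_cast ENat.natCast_ne_top (x.length + c))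
  obtain ⟨p, hp, he⟩ := iInf_length_attained _ h
  exact ⟨p, hp, by unfold C Cw; rw [he]; rfl⟩

theorem exists_program_cond {E : BStr → BStr →. BStr} (hE : OptimalCDM E) (x y : BStr) :
    ∃ p, x ∈ E p y ∧ Ccond E x y = p.length := by
  have h : ∃ p, x ∈ E p y := by
    by_contra hn
    push Not at hn
    obtain ⟨c, hc⟩ := hE.2 (fun p _ => Part.some p) Computable.fst
    have h1 := (hc x y).trans (add_le_add_left
      (CwCond_le (fun p _ => Part.some p) (Part.mem_some x)) _)
    have h2 : CwCond E x y = ⊤ := by simp [CwCond, hn]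
    rw [h2, top_le_iff] at h1
    exact absurd h1 (by exact_mod_cast ENat.natCast_ne_top (x.length + c))
  obtain ⟨p, hp, he⟩ := iInf_length_attained _ h
  exact ⟨p, hp, by unfold Ccond CwCond; rw [he]; rfl⟩

theorem C_le_of_partrec {D : BStr →. BStr} (hD : OptimalDM D) {D' : BStr →. BStr}
    (h : Partrec D') : ∃ c : ℕ, ∀ x p, x ∈ D' p → C D x ≤ p.length + c := by
  obtain ⟨c, hc⟩ := hD.2 D' h
  refine ⟨c, fun x p hp => ?_⟩
  have h1 := (hc x).trans (add_le_add_left (Cw_le D' hp) _)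
  exact ENat.toNat_le_of_le_natCast (by exact_mod_cast h1)

theorem Ccond_le_of_partrec {E : BStr → BStr →. BStr} (hE : OptimalCDM E)
    {E' : BStr → BStr →. BStr} (h : Partrec₂ E') :
    ∃ c : ℕ, ∀ x y p, x ∈ E' p y → Ccond E x y ≤ p.length + c := by
  obtain ⟨c, hc⟩ := hE.2 E' h
  refine ⟨c, fun x y p hp => ?_⟩
  have h1 := (hc x y).trans (add_le_add_left (CwCond_le E' hp) _)
  exact ENat.toNat_le_of_le_natCast (by exact_mod_cast h1)

theorem C_le_of_index {D : BStr →. BStr} (hD : OptimalDM D) {h : ℕ × ℕ → ℕ →. BStr}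
    (hh : Partrec₂ h) : ∃ c : ℕ, ∀ n m k i z, i < 2 ^ k → z ∈ h (n, m) i →
      C D z ≤ k + 2 * n.size + 2 * m.size + c := by
  have hp : Partrec (fun q : BStr =>
      h (bval (sdFst q), bval (sdFst (sdSnd q))) (bval (sdSnd (sdSnd q)))) := by
    refine hh.comp (Primrec.to_comp ?_) (Primrec.to_comp ?_)
    · exact (bval_primrec.comp sdFst_primrec).pair
        (bval_primrec.comp (sdFst_primrec.comp sdSnd_primrec))
    · exact bval_primrec.comp (sdSnd_primrec.comp sdSnd_primrec)
  obtain ⟨c, hc⟩ := C_le_of_partrec hD hp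
  refine ⟨c + 2, fun n m k i z hi hz => ?_⟩
  obtain ⟨s, hs, hsv⟩ := exists_bval n.size n (Nat.lt_size_self n)
  obtain ⟨u, hu, huv⟩ := exists_bval m.size m (Nat.lt_size_self m)
  obtain ⟨r, hr, hrv⟩ := exists_bval k i hi
  have := hc z (sd s ++ (sd u ++ r)) (by simpa only [sdFst_sd, sdSnd_sd, hsv, huv, hrv] using hz)
  simp only [List.length_append, sd_length] at this
  omega

theorem Ccond_le_of_index {E : BStr → BStr →. BStr} (hE : OptimalCDM E)
    {h : ℕ × BStr → ℕ →. BStr} (hh : Partrec₂ h) :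
    ∃ c : ℕ, ∀ n x k i z, i < 2 ^ k → z ∈ h (n, x) i →
      Ccond E z x ≤ k + 2 * n.size + c := by
  have hp : Partrec₂ (fun q x : BStr => h (bval (sdFst q), x) (bval (sdSnd q))) := by
    refine hh.comp ?_ (Primrec.to_comp ?_)
    · exact (bval_primrec.comp (sdFst_primrec.comp Primrec.fst)).to_comp.pair Computable.snd
    · exact bval_primrec.comp (sdSnd_primrec.comp Primrec.fst)
  obtain ⟨c, hc⟩ := Ccond_le_of_partrec hE hp
  refine ⟨c + 1, fun n x k i z hi hz => ?_⟩
  obtain ⟨s, hs, hsv⟩ := exists_bval n.size n (Nat.lt_size_self n)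
  obtain ⟨r, hr, hrv⟩ := exists_bval k i hi
  have := hc z x (sd s ++ r) (by simpa only [sdFst_sd, sdSnd_sd, hsv, hrv] using hz)
  simp only [List.length_append, sd_length] at this
  omega

/-- The easy inequality. -/
theorem pair_le {D : BStr →. BStr} (hD : OptimalDM D)
    {E : BStr → BStr →. BStr} (hE : OptimalCDM E)
    (pair : BStr → BStr → BStr) (hpc : Computable₂ pair) :
    ∃ c : ℕ, ∀ x y, C D (pair x y) ≤ C D y + Ccond E x y + 2 * (C D y).size + c := by
  have hp : Partrec (fun q : BStr =>
      (D ((sdSnd q).take (bval (sdFst q)))).bind fun y =>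
        (E ((sdSnd q).drop (bval (sdFst q))) y).map fun x => pair x y) := by
    refine Partrec.bind (hD.1.comp (Primrec.to_comp ?_)) ?_
    · exact Primrec.list_take.comp (bval_primrec.comp sdFst_primrec) sdSnd_primrec
    · refine Partrec.map (hE.1.comp (Primrec.to_comp ?_) Computable.snd) ?_
      · exact (Primrec.list_drop.comp (bval_primrec.comp sdFst_primrec) sdSnd_primrec).comp
          Primrec.fst
      · exact hpc.comp Computable.snd (Computable.snd.comp Computable.fst)
  obtain ⟨c, hc⟩ := C_le_of_partrec hD hp
  refine ⟨c + 1, fun x y => ?_⟩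
  obtain ⟨p, hpy, hpl⟩ := exists_program hD y
  obtain ⟨r, hrx, hrl⟩ := exists_program_cond hE x y
  obtain ⟨s, hs, hsv⟩ := exists_bval (C D y).size (C D y) (Nat.lt_size_self _)
  have := hc (pair x y) (sd s ++ (p ++ r)) (by
    simp only [sdFst_sd, sdSnd_sd, hsv, hpl, List.take_left, List.drop_left]
    exact Part.mem_bind hpy (Part.mem_map (fun x => pair x y) hrx))
  simp only [List.length_append, sd_length] at this
  omega

/-! ## The hard inequality -/

/-- The time-bounded test that the program coded by `q.2.1` has length `n` and prints
the pair `q.2.2`; the pair is returned if it succeeds. -/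
def pairEnum (code : Nat.Partrec.Code) (pair : BStr → BStr → BStr) (n t : ℕ) :
    Option (BStr × BStr) :=
  (Encodable.decode (α := ℕ × BStr × BStr × BStr) t).bind fun q =>
    bif (decide (q.2.1.length = n)) && decide (code.evaln q.1 (Encodable.encode q.2.1) =
      some (Encodable.encode (pair q.2.2.1 q.2.2.2))) then some q.2.2 else none

theorem evaln_computable_aux (code : Nat.Partrec.Code) :
    Computable₂ (fun (s : ℕ) (p : BStr) => code.evaln s (Encodable.encode p)) :=
  Nat.Partrec.Code.primrec_evaln.to_comp.comp
    ((Computable.fst.pair (Computable.const code)).pair (Computable.encode.comp Computable.snd))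

theorem pairTest_computable (code : Nat.Partrec.Code) (pair : BStr → BStr → BStr)
    (hpc : Computable₂ pair) :
    Computable (fun q : ℕ × BStr × BStr × BStr =>
      decide (code.evaln q.1 (Encodable.encode q.2.1) =
        some (Encodable.encode (pair q.2.2.1 q.2.2.2)))) := by
  have h2 : Computable (fun r : ℕ × BStr × BStr × BStr =>
      code.evaln r.1 (Encodable.encode r.2.1)) :=
    (evaln_computable_aux code).comp Computable.fst (Computable.fst.comp Computable.snd)
  have hab : Computable (fun r : ℕ × BStr × BStr × BStr => r.2.2) :=
    Computable.snd.comp Computable.snd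
  have h0 : Computable (fun r : ℕ × BStr × BStr × BStr => pair r.2.2.1 r.2.2.2) :=
    hpc.comp (Computable.fst.comp hab) (Computable.snd.comp hab)
  have h3 : Computable (fun r : ℕ × BStr × BStr × BStr =>
      some (Encodable.encode (pair r.2.2.1 r.2.2.2))) :=
    Computable.option_some.comp (Computable.encode.comp h0)
  exact (Primrec.eq (α := Option ℕ)).decide.to_comp.comp h2 h3

theorem pairBody_computable (code : Nat.Partrec.Code) (pair : BStr → BStr → BStr)
    (hpc : Computable₂ pair) :
    Computable₂ (fun (r : ℕ × ℕ) (q : ℕ × BStr × BStr × BStr) =>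
      bif (decide (q.2.1.length = r.1)) && decide (code.evaln q.1 (Encodable.encode q.2.1) =
        some (Encodable.encode (pair q.2.2.1 q.2.2.2))) then some q.2.2 else none) := by
  have hq : Computable (fun r : (ℕ × ℕ) × (ℕ × BStr × BStr × BStr) => r.2) := Computable.snd
  have hn : Computable (fun r : (ℕ × ℕ) × (ℕ × BStr × BStr × BStr) => r.1.1) :=
    Computable.fst.comp Computable.fst
  have hp : Computable (fun r : (ℕ × ℕ) × (ℕ × BStr × BStr × BStr) => r.2.2.1) :=
    Computable.fst.comp (Computable.snd.comp hq)
  have hab : Computable (fun r : (ℕ × ℕ) × (ℕ × BStr × BStr × BStr) => r.2.2.2) :=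
    Computable.snd.comp (Computable.snd.comp hq)
  have h1 : Computable (fun r : (ℕ × ℕ) × (ℕ × BStr × BStr × BStr) =>
      decide (r.2.2.1.length = r.1.1)) :=
    (Primrec.eq (α := ℕ)).decide.to_comp.comp (Computable.list_length.comp hp) hn
  have h4 := (pairTest_computable code pair hpc).comp hq
  exact Computable.cond (Primrec.and.to_comp.comp h1 h4)
    (Computable.option_some.comp hab) (Computable.const none)

theorem pairEnum_computable (code : Nat.Partrec.Code) (pair : BStr → BStr → BStr)
    (hpc : Computable₂ pair) : Computable₂ (pairEnum code pair) := by
  have h6 : Computable (fun r : ℕ × ℕ =>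
      Encodable.decode (α := ℕ × BStr × BStr × BStr) r.2) :=
    Computable.decode.comp Computable.snd
  exact Computable.option_bind h6 (pairBody_computable code pair hpc)

theorem pairEnum_spec (D : BStr →. BStr) (code : Nat.Partrec.Code)
    (hcode : code.eval = fun n => Part.bind (Encodable.decode (α := BStr) n) fun a =>
      (D a).map Encodable.encode)
    (pair : BStr → BStr → BStr) (n : ℕ) (ab : BStr × BStr) :
    (∃ t, pairEnum code pair n t = some ab) ↔
      ∃ p : BStr, p.length = n ∧ pair ab.1 ab.2 ∈ D p := by
  have key : ∀ p w : BStr, (∃ s, code.evaln s (Encodable.encode p) = some (Encodable.encode w))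
      ↔ w ∈ D p := by
    intro p w
    have := (Nat.Partrec.Code.evaln_complete (c := code) (n := Encodable.encode p)
      (x := Encodable.encode w)).symm
    simp only [Option.mem_def] at this
    rw [this, hcode]
    simp [Encodable.encodek]
  constructor
  · rintro ⟨t, ht⟩
    unfold pairEnum at ht
    rw [Option.bind_eq_some_iff] at ht
    obtain ⟨⟨s, p, a, b⟩, -, h⟩ := ht
    rw [cond_eq_ite] at h
    split at h
    · rename_i hc
      rw [Bool.and_eq_true, decide_eq_true_eq, decide_eq_true_eq] at hc
      cases h
      exact ⟨p, hc.1, (key _ _).1 ⟨s, hc.2⟩⟩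
    · cases h
  · rintro ⟨p, hp, hD⟩
    obtain ⟨s, hs⟩ := (key _ _).2 hD
    refine ⟨Encodable.encode (s, p, ab), ?_⟩
    unfold pairEnum
    rw [Encodable.encodek]
    simp [hp, hs]

/-- Enumeration of a section of the set enumerated by `f`. -/
def secEnum (f : ℕ → ℕ → Option (BStr × BStr)) (q : ℕ × BStr) (t : ℕ) : Option BStr :=
  (f q.1 t).bind fun ab => bif decide (ab.1 = q.2) then some ab.2 else none

theorem secEnum_computable {f : ℕ → ℕ → Option (BStr × BStr)} (hf : Computable₂ f) :
    Computable₂ (secEnum f) := by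
  refine Computable.option_bind
    (hf.comp (Computable.fst.comp Computable.fst) Computable.snd) ?_
  refine Computable.cond ((Primrec.eq (α := BStr)).decide.to_comp.comp
    (Computable.fst.comp Computable.snd)
    (Computable.snd.comp (Computable.fst.comp Computable.fst))) ?_ (Computable.const none)
  exact Computable.option_some.comp (Computable.snd.comp Computable.snd)

theorem secEnum_eq (f : ℕ → ℕ → Option (BStr × BStr)) (n : ℕ) (a b : BStr) (t : ℕ) :
    secEnum f (n, a) t = some b ↔ f n t = some (a, b) := by
  unfold secEnum
  cases f n t with
  | none => simp
  | some ab =>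
    obtain ⟨a', b'⟩ := ab
    by_cases h : a' = a <;> simp [h]

/-- Enumeration of the elements whose section has at least `2 ^ m` elements. -/
def bigEnum (f : ℕ → ℕ → Option (BStr × BStr)) (q : ℕ × ℕ) (t : ℕ) : Option BStr :=
  (f q.1 t.unpair.1).bind fun ab =>
    bif decide (2 ^ q.2 ≤ (enumL (secEnum f) (q.1, ab.1) t.unpair.2).length)
      then some ab.1 else none

theorem two_pow_primrec : Primrec (fun n : ℕ => 2 ^ n) := by
  refine (Primrec.nat_rec₁ (f := fun _ v => v * 2) 1
    (Primrec.nat_mul.comp Primrec.snd (Primrec.const 2))).of_eq fun n => ?_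
  induction n with
  | zero => rfl
  | succ n ih => rw [pow_succ, ← ih]

theorem bigEnum_computable {f : ℕ → ℕ → Option (BStr × BStr)} (hf : Computable₂ f) :
    Computable₂ (bigEnum f) := by
  refine Computable.option_bind
    (hf.comp (Computable.fst.comp Computable.fst)
      (Computable.fst.comp (Computable.unpair.comp Computable.snd))) ?_
  have ht : Computable (fun r : ((ℕ × ℕ) × ℕ) × (BStr × BStr) => r.1.2.unpair.2) :=
    Computable.snd.comp (Computable.unpair.comp (Computable.snd.comp Computable.fst))
  have hn : Computable (fun r : ((ℕ × ℕ) × ℕ) × (BStr × BStr) => r.1.1.1) :=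
    Computable.fst.comp (Computable.fst.comp Computable.fst)
  have hm : Computable (fun r : ((ℕ × ℕ) × ℕ) × (BStr × BStr) => r.1.1.2) :=
    Computable.snd.comp (Computable.fst.comp Computable.fst)
  have ha : Computable (fun r : ((ℕ × ℕ) × ℕ) × (BStr × BStr) => r.2.1) :=
    Computable.fst.comp Computable.snd
  refine Computable.cond (Primrec.nat_le.decide.to_comp.comp (two_pow_primrec.to_comp.comp hm)
    (Computable.list_length.comp
      ((enumL_computable (secEnum_computable hf)).comp (hn.pair ha) ht))) ?_ (Computable.const none)
  exact Computable.option_some.comp ha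

theorem bigEnum_eq (f : ℕ → ℕ → Option (BStr × BStr)) (n m : ℕ) (a : BStr) :
    (∃ t, bigEnum f (n, m) t = some a) ↔ (∃ b t, f n t = some (a, b)) ∧
      ∃ t, 2 ^ m ≤ (enumL (secEnum f) (n, a) t).length := by
  constructor
  · rintro ⟨t, ht⟩
    unfold bigEnum at ht
    rw [Option.bind_eq_some_iff] at ht
    obtain ⟨⟨a', b⟩, h1, h⟩ := ht
    rw [cond_eq_ite] at h
    split at h
    · rename_i hc
      cases h
      exact ⟨⟨b, _, h1⟩, _, of_decide_eq_true hc⟩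
    · cases h
  · rintro ⟨⟨b, t, h⟩, s, hs⟩
    refine ⟨Nat.pair t s, ?_⟩
    unfold bigEnum
    simp [h, hs]

theorem finset_of_programs (D : BStr →. BStr) (pair : BStr → BStr → BStr)
    (hpi : Function.Injective fun q : BStr × BStr => pair q.1 q.2) (n : ℕ) :
    ∃ A : Finset (BStr × BStr), A.card ≤ 2 ^ n ∧
      ∀ ab, ab ∈ A ↔ ∃ p : BStr, p.length = n ∧ pair ab.1 ab.2 ∈ D p := by
  let W : Finset BStr := (Finset.univ : Finset (List.Vector Bool n)).image List.Vector.toList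
  have hWm : ∀ p : BStr, p.length = n → p ∈ W := fun p hp =>
    Finset.mem_image.2 ⟨⟨p, hp⟩, Finset.mem_univ _, rfl⟩
  have hWc : W.card ≤ 2 ^ n := by
    refine Finset.card_image_le.trans ?_
    rw [Finset.card_univ, card_vector, Fintype.card_bool]
  let S : Set (BStr × BStr) := {ab | ∃ p : BStr, p.length = n ∧ pair ab.1 ab.2 ∈ D p}
  have hS : ∀ ab ∈ S, ∃ p : BStr, p.length = n ∧ pair ab.1 ab.2 ∈ D p := fun ab h => h
  choose! g hg1 hg2 using hS
  have hinj : Set.InjOn g S := by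
    intro u hu v hv huv
    have h1 := hg2 u hu
    rw [huv] at h1
    exact hpi (Part.mem_unique h1 (hg2 v hv))
  have hmaps : Set.MapsTo g S (W : Set BStr) := fun u hu => hWm _ (hg1 u hu)
  have hfin : S.Finite := Set.Finite.of_injOn hmaps hinj W.finite_toSet
  refine ⟨hfin.toFinset, ?_, fun ab => hfin.mem_toFinset⟩
  refine (Finset.card_le_card_of_injOn (t := W) g ?_ ?_).trans hWc
  · intro u hu
    exact hmaps (by simpa using hu)
  · simpa using hinj

theorem hard_ineq {D : BStr →. BStr} (hD : OptimalDM D)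
    {E : BStr → BStr →. BStr} (hE : OptimalCDM E)
    (pair : BStr → BStr → BStr) (hpc : Computable₂ pair)
    (hpi : Function.Injective fun q : BStr × BStr => pair q.1 q.2) :
    ∃ c : ℕ, ∀ x y, C D x + Ccond E y x ≤
      C D (pair x y) + 6 * (C D (pair x y)).size + c := by
  obtain ⟨code, hcode⟩ := Nat.Partrec.Code.exists_code.1 hD.1
  set f := pairEnum code pair with hf
  have hfc : Computable₂ f := pairEnum_computable code pair hpc
  obtain ⟨c1, hc1⟩ := C_le_of_index hD (enumAt_partrec (bigEnum_computable hfc))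
  obtain ⟨c2, hc2⟩ := Ccond_le_of_index hE (enumAt_partrec (secEnum_computable hfc))
  refine ⟨c1 + c2 + 1, fun x y => ?_⟩
  obtain ⟨p, hp, hpl⟩ := exists_program hD (pair x y)
  set n := C D (pair x y) with hn
  obtain ⟨A, hAc, hA⟩ := finset_of_programs D pair hpi n
  have hAf : ∀ ab, ab ∈ A ↔ ∃ t, f n t = some ab := fun ab =>
    (hA ab).trans (pairEnum_spec D code hcode pair n ab).symm
  have hxy : (x, y) ∈ A := (hA _).2 ⟨p, hpl.symm, hp⟩
  -- sections
  let sec : BStr → Finset BStr := fun a => (A.filter fun ab => ab.1 = a).image Prod.snd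
  have hsec : ∀ a b, b ∈ sec a ↔ (a, b) ∈ A := by
    intro a b
    simp [sec]
  have hsecf : ∀ a, ∀ t z, secEnum f (n, a) t = some z → z ∈ sec a := by
    intro a t z h
    rw [secEnum_eq] at h
    exact (hsec _ _).2 ((hAf _).2 ⟨t, h⟩)
  have hseccard : ∀ a, (sec a).card ≤ (A.filter fun ab => ab.1 = a).card :=
    fun a => Finset.card_image_le
  have hy : y ∈ sec x := (hsec _ _).2 hxy
  have hpos : (sec x).card ≠ 0 := Finset.card_ne_zero_of_mem hy
  set m := Nat.log 2 (sec x).card with hm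
  have hm1 : 2 ^ m ≤ (sec x).card := Nat.pow_log_le_self 2 hpos
  have hm2 : (sec x).card < 2 ^ (m + 1) := Nat.lt_pow_succ_log_self (by norm_num) _
  have hmn : m ≤ n := by
    have : 2 ^ m ≤ 2 ^ n :=
      hm1.trans ((hseccard x).trans ((Finset.card_filter_le _ _).trans hAc))
    exact (Nat.pow_le_pow_iff_right (by norm_num)).1 this
  -- description of y given x
  have hY : Ccond E y x ≤ m + 1 + 2 * n.size + c2 := by
    obtain ⟨t, ht⟩ := (hAf _).1 hxy
    obtain ⟨i, hi, hiy⟩ := exists_enumAt (secEnum f) (n, x) (sec x) (hsecf x) y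
      ⟨t, (secEnum_eq f n x y t).2 ht⟩
    exact hc2 n x (m + 1) i y (hi.trans hm2) hiy
  -- description of x
  have hX : C D x ≤ (n - m) + 2 * n.size + 2 * m.size + c1 := by
    let Bg : Finset BStr := (A.image Prod.fst).filter fun a => 2 ^ m ≤ (sec a).card
    have hBg : ∀ t a, bigEnum f (n, m) t = some a → a ∈ Bg := by
      intro t a h
      obtain ⟨⟨b, s, hs⟩, u, hu⟩ := (bigEnum_eq f n m a).1 ⟨t, h⟩
      refine Finset.mem_filter.2 ⟨Finset.mem_image.2 ⟨(a, b), (hAf _).2 ⟨s, hs⟩, rfl⟩, ?_⟩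
      exact hu.trans (enumL_length_le _ _ _ _ (hsecf a))
    have hBc : Bg.card ≤ 2 ^ (n - m) := by
      have h1 : 2 ^ m * Bg.card ≤ (A.filter fun ab => ab.1 ∈ Bg).card := by
        refine Finset.mul_card_image_le_card_of_maps_to (f := Prod.fst)
          (fun ab h => (Finset.mem_filter.1 h).2) _ fun a ha => ?_
        refine ((Finset.mem_filter.1 ha).2.trans (hseccard a)).trans (Finset.card_le_card ?_)
        intro ab h
        rw [Finset.mem_filter] at h
        rw [Finset.mem_filter, Finset.mem_filter]
        exact ⟨⟨h.1, h.2 ▸ ha⟩, h.2⟩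
      have h2 : 2 ^ m * Bg.card ≤ 2 ^ m * 2 ^ (n - m) := by
        rw [← pow_add, Nat.add_sub_cancel' hmn]
        exact h1.trans ((Finset.card_filter_le _ _).trans hAc)
      exact Nat.le_of_mul_le_mul_left h2 (by positivity)
    obtain ⟨T, hT⟩ := enumL_exhaust (secEnum f) (n, x) (sec x) (by
      intro z hz
      obtain ⟨t, ht⟩ := (hAf _).1 ((hsec _ _).1 hz)
      exact ⟨t, (secEnum_eq f n x z t).2 ht⟩)
    obtain ⟨t, ht⟩ := (hAf _).1 hxy
    obtain ⟨i, hi, hix⟩ := exists_enumAt (bigEnum f) (n, m) Bg hBg x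
      ((bigEnum_eq f n m x).2 ⟨⟨y, t, ht⟩, T, hm1.trans hT⟩)
    exact hc1 n m (n - m) i x (hi.trans_le hBc) hix
  have := Nat.size_le_size hmn
  omega

/-! ## Logarithms -/

theorem size_le_logb (n : ℕ) : (n.size : ℝ) ≤ Real.logb 2 ((n : ℝ) + 2) + 1 := by
  have h : 2 ^ n.size ≤ 2 * (n + 2) := by
    rcases Nat.eq_zero_or_pos n.size with h | h
    · rw [h]; omega
    · obtain ⟨k, hk⟩ := Nat.exists_eq_succ_of_ne_zero h.ne'
      have : 2 ^ k ≤ n := Nat.lt_size.1 (by omega)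
      rw [hk, Nat.succ_eq_add_one, pow_succ]
      omega
  have h' : (2 : ℝ) ^ n.size ≤ 2 * ((n : ℝ) + 2) := by exact_mod_cast h
  have h0 : (0 : ℝ) < (n : ℝ) + 2 := by positivity
  have := Real.logb_le_logb_of_le (b := 2) (by norm_num) (by positivity) h'
  rw [Real.logb_mul (by norm_num) h0.ne', Real.logb_pow, Real.logb_self_eq_one (by norm_num)] at this
  linarith

theorem size_add_le (a b : ℕ) : (a + b).size ≤ a.size + b.size + 1 := by
  rw [Nat.size_le]
  have ha := Nat.lt_size_self a
  have hb := Nat.lt_size_self b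
  have h1 : 2 ^ a.size ≤ 2 ^ (a.size + b.size) := Nat.pow_le_pow_right (by norm_num) (by omega)
  have h2 : 2 ^ b.size ≤ 2 ^ (a.size + b.size) := Nat.pow_le_pow_right (by norm_num) (by omega)
  rw [pow_succ]
  omega

theorem size_le_self' (n : ℕ) : n.size ≤ n := Nat.size_le.2 Nat.lt_two_pow_self

theorem size_bound {a n c : ℕ} (h : a ≤ n + 6 * n.size + c) : a.size ≤ n.size + c + 3 := by
  have h1 : n.size ≤ n := size_le_self' n
  rw [Nat.size_le]
  have hn := Nat.lt_size_self n
  have hc : c + 1 ≤ 2 ^ c := Nat.lt_two_pow_self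
  have h2 : a < 8 * (2 ^ n.size * 2 ^ c) := by
    have : a < 8 * 2 ^ n.size + c := by omega
    have h3 : 1 ≤ 2 ^ n.size := Nat.one_le_two_pow
    nlinarith
  calc a < 8 * (2 ^ n.size * 2 ^ c) := h2
    _ = 2 ^ (n.size + c + 3) := by rw [pow_add, pow_add]; ring

/-- Symmetry of algorithmic mutual information `I(x:y) = C(y) − C(y|x)`
with logarithmic precision. -/
theorem stmt10 (D : BStr →. BStr) (hD : OptimalDM D)
    (E : BStr → BStr →. BStr) (hE : OptimalCDM E)
    (pair : BStr → BStr → BStr) (hpc : Computable₂ pair)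
    (hpi : Function.Injective fun q : BStr × BStr => pair q.1 q.2) :
    ∃ c : ℝ, ∀ x y : BStr,
      |((C D y : ℝ) - (Ccond E y x : ℝ)) - ((C D x : ℝ) - (Ccond E x y : ℝ))|
        ≤ c * Real.logb 2 ((C D (pair x y) : ℝ) + 2) := by
  have hpc' : Computable₂ (fun a b => pair b a) := hpc.comp Computable.snd Computable.fst
  have hpi' : Function.Injective fun q : BStr × BStr => (fun a b => pair b a) q.1 q.2 := by
    rintro ⟨a, b⟩ ⟨a', b'⟩ h
    have := @hpi (b, a) (b', a') h
    simp only [Prod.mk.injEq] at this ⊢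
    exact this.symm
  obtain ⟨c1, h1⟩ := hard_ineq hD hE pair hpc hpi
  obtain ⟨c2, h2⟩ := hard_ineq hD hE _ hpc' hpi'
  obtain ⟨c3, h3⟩ := pair_le hD hE pair hpc
  obtain ⟨c4, h4⟩ := pair_le hD hE _ hpc'
  have key : ∀ x y, ∃ n, n = C D (pair x y) ∧
      C D x + Ccond E y x ≤ C D y + Ccond E x y + (8 * n.size + (3 * c1 + 3 * c2 + c3 + c4 + 6)) ∧
      C D y + Ccond E x y ≤ C D x + Ccond E y x + (8 * n.size + (3 * c1 + 3 * c2 + c3 + c4 + 6)) := by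
    intro x y
    refine ⟨_, rfl, ?_⟩
    have e1 := h1 x y
    have e2 := h2 y x
    have e3 := h3 x y
    have e4 := h4 y x
    generalize C D (pair x y) = n at *
    have s1 : (C D x).size ≤ n.size + c1 + 3 := size_bound (by omega)
    have s2 : (C D y).size ≤ n.size + c2 + 3 := size_bound (by omega)
    omega
  refine ⟨16 + (3 * c1 + 3 * c2 + c3 + c4 + 6), fun x y => ?_⟩
  obtain ⟨n, hn, k1, k2⟩ := key x y
  rw [← hn]
  have hs := size_le_logb n
  have hL : 1 ≤ Real.logb 2 ((n : ℝ) + 2) := by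
    rw [Real.le_logb_iff_rpow_le (by norm_num) (by positivity)]
    norm_num
  have k1' : (C D x : ℝ) + Ccond E y x ≤ C D y + Ccond E x y +
      (8 * n.size + (3 * c1 + 3 * c2 + c3 + c4 + 6)) := by exact_mod_cast k1
  have k2' : (C D y : ℝ) + Ccond E x y ≤ C D x + Ccond E y x +
      (8 * n.size + (3 * c1 + 3 * c2 + c3 + c4 + 6)) := by exact_mod_cast k2
  have hc : (0 : ℝ) ≤ 3 * c1 + 3 * c2 + c3 + c4 + 6 := by positivity
  generalize (3 * c1 + 3 * c2 + c3 + c4 + 6 : ℝ) = K at *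
  have hK : K ≤ K * Real.logb 2 ((n : ℝ) + 2) := le_mul_of_one_le_right hc hL
  rw [add_mul, abs_le]
  constructor <;> linarith
end

section
/- There exists an infinite binary sequence ω that is Mises–Church random with parameter 1/2 and a constant c such that the complexity of every prefix satisfies C(ω₁ω₂…ω_n) ≤ c·log(n+2) for all n ≥ 1. (Kolmogorov's theorem separating the Mises–Church definition of a Bernoulli sequence from complexity-based randomness.) -/
open scoped Classical

/-- The prefix `ω₁…ω_n` of an infinite binary sequence. -/
def pref (ω : ℕ → Bool) (n : ℕ) : BStr := (List.range n).map ω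

/-- Mises–Church randomness with parameter `1/2`: every total computable
selection rule that selects infinitely many terms of `ω` yields a selected
subsequence in which the limiting frequency of ones equals `1/2`. -/
def MisesChurchRandom (ω : ℕ → Bool) : Prop :=
  ∀ r : BStr → Bool, Computable r →
    {n : ℕ | r (pref ω n) = true}.Infinite →
    Filter.Tendsto
      (fun m : ℕ =>
        (((Finset.range m).filter
            (fun k => ω (Nat.nth (fun n => r (pref ω n) = true) k) = true)).card : ℝ)
          / (m : ℝ))
      Filter.atTop (nhds (1 / 2 : ℝ))


open Nat.Partrec (Code)
open Encodable Denumerable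

namespace KolMC

/-- Normalising function `m ↦ m⌊√m⌋`. -/
def gg (m : ℕ) : ℕ := m * Nat.sqrt m

/-- A history: list (newest first) of pairs (selection vector, bit). -/
abbrev Hist := List (List Bool × Bool)

def cnt (H : Hist) (i : ℕ) (b : Bool) : ℕ :=
  H.foldr (fun e s => bif (e.1.getD i false && (e.2 == b)) then s + 1 else s) 0

def den (H : Hist) (i : ℕ) : ℕ := 2 ^ i * gg (cnt H i true + cnt H i false + 1)

def stepF (H : Hist) (v : List Bool) (s : ℕ × ℕ × ℕ) (i : ℕ) : ℕ × ℕ × ℕ :=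
  bif v.getD i false then
    (s.1 * den H i + cnt H i true * s.2.2, s.2.1 * den H i + cnt H i false * s.2.2,
      s.2.2 * den H i)
  else s

def acc (H : Hist) (v : List Bool) (n : ℕ) : ℕ × ℕ × ℕ :=
  (List.range n).foldl (fun s i => stepF H v s i) (0, 0, 1)

def dec (H : Hist) (v : List Bool) : Bool :=
  decide ((acc H v v.length).1 ≤ (acc H v v.length).2.1)

def out (H : Hist) : BStr := (H.map Prod.snd).reverse

theorem primrec_pow : Primrec (fun i : ℕ => 2 ^ i) := by
  have : Primrec (fun i : ℕ => (Nat.rec 1 (fun _ k => 2 * k) i : ℕ)) :=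
    Primrec.nat_rec₁ 1 ((Primrec.nat_double.comp Primrec.snd).to₂)
  refine this.of_eq fun n => ?_
  induction n with
  | zero => rfl
  | succ k ih => simp only [ih]; ring

theorem primrec_gg : Primrec gg :=
  Primrec.nat_mul.comp Primrec.id Primrec.nat_sqrt

theorem primrec_cnt : Primrec (fun p : (Hist × ℕ) × Bool => cnt p.1.1 p.1.2 p.2) := by
  unfold cnt
  refine Primrec.list_foldr (h := fun (p : (Hist × ℕ) × Bool) (q : (List Bool × Bool) × ℕ) =>
    bif (q.1.1.getD p.1.2 false && (q.1.2 == p.2)) then q.2 + 1 else q.2)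
    (Primrec.fst.comp Primrec.fst) (Primrec.const 0) ?_
  refine Primrec.cond ?_ ?_ ?_
  · refine Primrec.and.comp ?_ ?_
    · exact (Primrec.list_getD false).comp
        (Primrec.fst.comp (Primrec.fst.comp Primrec.snd))
        (Primrec.snd.comp (Primrec.fst.comp Primrec.fst))
    · exact (Primrec.dom_bool₂ (fun a b => a == b)).comp
        (Primrec.snd.comp (Primrec.fst.comp Primrec.snd))
        (Primrec.snd.comp Primrec.fst)
  · exact Primrec.succ.comp (Primrec.snd.comp Primrec.snd)
  · exact Primrec.snd.comp Primrec.snd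

theorem primrec_cnt' {α : Type*} [Primcodable α] {f : α → Hist} {g : α → ℕ}
    (hf : Primrec f) (hg : Primrec g) (b : Bool) : Primrec (fun a => cnt (f a) (g a) b) :=
  primrec_cnt.comp ((hf.pair hg).pair (Primrec.const b))

theorem primrec_den {α : Type*} [Primcodable α] {f : α → Hist} {g : α → ℕ}
    (hf : Primrec f) (hg : Primrec g) : Primrec (fun a => den (f a) (g a)) := by
  unfold den
  exact Primrec.nat_mul.comp (primrec_pow.comp hg) (primrec_gg.comp (Primrec.succ.comp
    (Primrec.nat_add.comp (primrec_cnt' hf hg true) (primrec_cnt' hf hg false))))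

theorem primrec_acc : Primrec (fun p : Hist × List Bool => acc p.1 p.2 p.2.length) := by
  unfold acc
  refine Primrec.list_foldl (h := fun (p : Hist × List Bool) (q : (ℕ × ℕ × ℕ) × ℕ) =>
    stepF p.1 p.2 q.1 q.2) (Primrec.list_range.comp (Primrec.list_length.comp Primrec.snd))
    (Primrec.const _) ?_
  unfold stepF
  have hH : Primrec (fun a : (Hist × List Bool) × ((ℕ × ℕ × ℕ) × ℕ) => a.1.1) :=
    Primrec.fst.comp Primrec.fst
  have hv : Primrec (fun a : (Hist × List Bool) × ((ℕ × ℕ × ℕ) × ℕ) => a.1.2) :=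
    Primrec.snd.comp Primrec.fst
  have hs : Primrec (fun a : (Hist × List Bool) × ((ℕ × ℕ × ℕ) × ℕ) => a.2.1) :=
    Primrec.fst.comp Primrec.snd
  have hi : Primrec (fun a : (Hist × List Bool) × ((ℕ × ℕ × ℕ) × ℕ) => a.2.2) :=
    Primrec.snd.comp Primrec.snd
  have h1 := Primrec.fst.comp hs
  have h2 := Primrec.fst.comp (Primrec.snd.comp hs)
  have h3 := Primrec.snd.comp (Primrec.snd.comp hs)
  have hd := primrec_den hH hi
  refine Primrec.cond ((Primrec.list_getD false).comp hv hi) ?_ hs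
  refine Primrec.pair ?_ (Primrec.pair ?_ ?_)
  · exact Primrec.nat_add.comp (Primrec.nat_mul.comp h1 hd)
      (Primrec.nat_mul.comp (primrec_cnt' hH hi true) h3)
  · exact Primrec.nat_add.comp (Primrec.nat_mul.comp h2 hd)
      (Primrec.nat_mul.comp (primrec_cnt' hH hi false) h3)
  · exact Primrec.nat_mul.comp h3 hd

theorem primrec_dec : Primrec (fun p : Hist × List Bool => dec p.1 p.2) := by
  unfold dec
  exact (PrimrecRel.comp Primrec.nat_le (Primrec.fst.comp primrec_acc)
    (Primrec.fst.comp (Primrec.snd.comp primrec_acc))).decide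

theorem primrec_out : Primrec out := by
  unfold out
  exact Primrec.list_reverse.comp (Primrec.list_map Primrec.id (Primrec.snd.comp Primrec.snd).to₂)

/-- Partial selection of rule `i` at time `m` using the totality table `t`. -/
def selP (t x : BStr) (m i : ℕ) : Part Bool :=
  cond (t.getD i false && decide (2 ^ i ≤ m))
    ((Code.eval (ofNat Code i) (encode x)).map (fun k => decide (k = 1))) (Part.some false)

def vecP (t x : BStr) (m : ℕ) : ℕ → Part BStr := fun k =>
  k.rec (Part.some []) (fun i IH => IH.bind fun v => (selP t x m i).map (fun b => v ++ [b]))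

def histP (t : BStr) (n : ℕ) : Part Hist :=
  n.rec (Part.some []) (fun m IH => IH.bind fun H =>
    (vecP t (out H) m m).map (fun v => (v, dec H v) :: H))

theorem partrec_selP : Partrec (fun p : (BStr × BStr) × (ℕ × ℕ) => selP p.1.1 p.1.2 p.2.1 p.2.2) := by
  unfold selP
  have ht : Primrec (fun p : (BStr × BStr) × (ℕ × ℕ) => p.1.1) := Primrec.fst.comp Primrec.fst
  have hx : Primrec (fun p : (BStr × BStr) × (ℕ × ℕ) => p.1.2) := Primrec.snd.comp Primrec.fst
  have hm : Primrec (fun p : (BStr × BStr) × (ℕ × ℕ) => p.2.1) := Primrec.fst.comp Primrec.snd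
  have hi : Primrec (fun p : (BStr × BStr) × (ℕ × ℕ) => p.2.2) := Primrec.snd.comp Primrec.snd
  refine Partrec.cond ?_ ?_ ?_
  · refine Primrec.to_comp (Primrec.and.comp ((Primrec.list_getD false).comp ht hi) ?_)
    exact (PrimrecRel.comp Primrec.nat_le (primrec_pow.comp hi) hm).decide
  · refine Partrec.map ?_ ?_
    · exact Code.eval_part.comp ((Computable.ofNat Code).comp hi.to_comp)
        (Primrec.encode.comp hx).to_comp
    · exact (Primrec.to_comp ((PrimrecRel.comp Primrec.eq Primrec.snd
        (Primrec.const 1)).decide)).to₂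
  · exact (Computable.const false)

theorem partrec_vecP : Partrec (fun p : (BStr × BStr) × ℕ => vecP p.1.1 p.1.2 p.2 p.2) := by
  unfold vecP
  refine Partrec.nat_rec (h := fun (p : (BStr × BStr) × ℕ) (q : ℕ × BStr) =>
    (selP p.1.1 p.1.2 p.2 q.1).map (fun b => q.2 ++ [b])) Computable.snd
    (Computable.const []) ?_
  refine Partrec.map ?_ ?_
  · have h : Computable (fun a : ((BStr × BStr) × ℕ) × (ℕ × BStr) => (a.1.1, (a.1.2, a.2.1))) :=
      ((Computable.fst.comp Computable.fst)).pair
        ((Computable.snd.comp Computable.fst).pair (Computable.fst.comp Computable.snd))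
    have h2 := Partrec.comp partrec_selP h
    exact h2
  · exact (Computable.list_concat.comp (Computable.snd.comp (Computable.snd.comp Computable.fst))
      Computable.snd).to₂

theorem partrec_histP : Partrec (fun p : BStr × ℕ => histP p.1 p.2) := by
  unfold histP
  refine Partrec.nat_rec (h := fun (p : BStr × ℕ) (q : ℕ × Hist) =>
    (vecP p.1 (out q.2) q.1 q.1).map (fun v => (v, dec q.2 v) :: q.2)) Computable.snd
    (Computable.const []) ?_
  refine Partrec.map ?_ ?_
  · have h : Computable (fun a : (BStr × ℕ) × (ℕ × Hist) => ((a.1.1, out a.2.2), a.2.1)) :=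
      ((Computable.fst.comp Computable.fst).pair
        (primrec_out.to_comp.comp (Computable.snd.comp Computable.snd))).pair
        (Computable.fst.comp Computable.snd)
    have h2 := Partrec.comp partrec_vecP h
    exact h2
  · have hH : Computable (fun a : ((BStr × ℕ) × (ℕ × Hist)) × BStr => a.1.2.2) :=
      Computable.snd.comp (Computable.snd.comp Computable.fst)
    exact (Computable.list_cons.comp (Computable.snd.pair
      (primrec_dec.to_comp.comp (hH.pair Computable.snd))) hH).to₂

def toN (l : BStr) : ℕ := l.foldr (fun b s => bif b then 2 * s + 1 else 2 * s) 0

theorem primrec_toN : Primrec toN := by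
  unfold toN
  refine Primrec.list_foldr (h := fun (_ : BStr) (q : Bool × ℕ) =>
    bif q.1 then 2 * q.2 + 1 else 2 * q.2) Primrec.id (Primrec.const 0) ?_
  exact Primrec.cond (Primrec.fst.comp Primrec.snd)
    (Primrec.nat_double_succ.comp (Primrec.snd.comp Primrec.snd))
    (Primrec.nat_double.comp (Primrec.snd.comp Primrec.snd))

theorem toN_bits (n : ℕ) : toN n.bits = n := by
  induction n using Nat.binaryRec' with
  | zero => simp [toN]
  | bit b n h ih =>
    rw [Nat.bits_append_bit n b h]
    unfold toN at *
    simp only [List.foldr_cons, ih]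
    cases b <;> simp [Nat.bit]

/-- The description method. -/
def descM : BStr →. BStr := fun p =>
  (histP (p.take (p.length / 2)) (toN (p.drop (p.length / 2)))).map out

theorem partrec_descM : Partrec descM := by
  unfold descM
  have hl : Primrec (fun p : BStr => p.length / 2) :=
    Primrec.nat_div.comp Primrec.list_length (Primrec.const 2)
  refine Partrec.map ?_ ?_
  · have h : Computable (fun p : BStr => (p.take (p.length / 2), toN (p.drop (p.length / 2)))) :=
      (Primrec.list_take.comp hl Primrec.id).to_comp.pair
      (primrec_toN.comp (Primrec.list_drop.comp hl Primrec.id)).to_comp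
    have h2 := Partrec.comp partrec_histP h
    exact h2
  · exact (primrec_out.to_comp.comp Computable.snd).to₂

/-- Totality of rule `i`. -/
noncomputable def chi (i : ℕ) : Bool :=
  decide (∀ x : BStr, (Code.eval (ofNat Code i) (encode x)).Dom)

noncomputable def sel (x : BStr) (m i : ℕ) : Bool :=
  chi i && decide (2 ^ i ≤ m) && decide (1 ∈ Code.eval (ofNat Code i) (encode x))

noncomputable def vec (x : BStr) (m : ℕ) : List Bool := (List.range m).map (sel x m)

noncomputable def hist : ℕ → Hist
  | 0 => []
  | n + 1 => (vec (out (hist n)) n, dec (hist n) (vec (out (hist n)) n)) :: hist n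

noncomputable def om (n : ℕ) : Bool := dec (hist n) (vec (out (hist n)) n)

theorem out_hist (n : ℕ) : out (hist n) = pref om n := by
  induction n with
  | zero => simp [out, hist, pref]
  | succ n ih =>
    have : pref om (n + 1) = pref om n ++ [om n] := by
      simp [pref, List.range_succ]
    rw [this, ← ih]
    simp [hist, out, om]

theorem selP_eq (t x : BStr) (m i : ℕ) (h : 2 ^ i ≤ m → t.getD i false = chi i) :
    selP t x m i = Part.some (sel x m i) := by
  unfold selP sel
  by_cases hm : 2 ^ i ≤ m
  · rw [h hm]
    simp only [hm, decide_true, Bool.and_true]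
    by_cases hc : chi i = true
    · have hd : (Code.eval (ofNat Code i) (encode x)).Dom := by
        have := hc
        simp only [chi, decide_eq_true_eq] at this
        exact this x
      obtain ⟨k, hk⟩ := Part.dom_iff_mem.1 hd
      rw [Part.eq_some_iff.2 hk]
      simp [hc, eq_comm]
    · simp [hc]
  · simp [hm]

theorem vecP_eq (t x : BStr) (m : ℕ) (h : ∀ i, 2 ^ i ≤ m → t.getD i false = chi i) (k : ℕ) :
    vecP t x m k = Part.some ((List.range k).map (sel x m)) := by
  induction k with
  | zero => simp [vecP]
  | succ k ih =>
    have : vecP t x m (k + 1) =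
      (vecP t x m k).bind fun v => (selP t x m k).map (fun b => v ++ [b]) := rfl
    rw [this, ih, selP_eq t x m k (h k)]
    simp [List.range_succ]

theorem histP_eq (t : BStr) (n : ℕ) (h : ∀ i, 2 ^ i < n → t.getD i false = chi i) :
    histP t n = Part.some (hist n) := by
  induction n with
  | zero => simp [histP, hist]
  | succ n ih =>
    have : histP t (n + 1) = (histP t n).bind fun H =>
      (vecP t (out H) n n).map (fun v => (v, dec H v) :: H) := rfl
    rw [this, ih (fun i hi => h i (by omega))]
    simp only [Part.bind_some]
    rw [vecP_eq t _ n (fun i hi => h i (by omega))]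
    simp [hist, vec]

theorem Cw_descM_le (n : ℕ) : Cw descM (pref om n) ≤ ((2 * n.size : ℕ) : ℕ∞) := by
  let p : BStr := (List.range n.size).map chi ++ n.bits
  have hlen : p.length = 2 * n.size := by
    simp [p, Nat.size_eq_bits_len]; omega
  have hhalf : p.length / 2 = n.size := by omega
  have hp : pref om n ∈ descM p := by
    unfold descM
    rw [hhalf]
    have h1 : p.take n.size = (List.range n.size).map chi := by simp [p]
    have h2 : p.drop n.size = n.bits := by simp [p]
    rw [h1, h2, toN_bits, histP_eq]
    · simp [out_hist]
    · intro i hi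
      have : i < n.size := Nat.lt_size.2 hi.le
      simp [this]
  unfold Cw
  refine (iInf₂_le p hp).trans ?_
  rw [hlen]

theorem C_bound (D : BStr →. BStr) (hD : OptimalDM D) :
    ∃ c : ℝ, ∀ n : ℕ, 1 ≤ n →
        (C D (pref om n) : ℝ) ≤ c * Real.logb 2 ((n : ℝ) + 2) := by
  obtain ⟨c, hc⟩ := hD.2 descM partrec_descM
  refine ⟨4 + c, fun n hn => ?_⟩
  have h1 : C D (pref om n) ≤ 2 * n.size + c := by
    unfold C
    refine ENat.toNat_le_of_le_natCast ?_
    refine (hc _).trans ?_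
    push_cast
    gcongr
    simpa using Cw_descM_le n
  have h2 : (1 : ℝ) ≤ Real.logb 2 ((n : ℝ) + 2) := by
    rw [Real.le_logb_iff_rpow_le (by norm_num) (by positivity)]
    simp
  have h3 : (n.size : ℝ) ≤ Real.logb 2 ((n : ℝ) + 2) + 1 := by
    obtain ⟨k, hk⟩ : ∃ k, n.size = k + 1 :=
      ⟨n.size - 1, by have := Nat.size_pos.2 hn; omega⟩
    have : 2 ^ k ≤ n := Nat.lt_size.1 (by omega)
    have : (k : ℝ) ≤ Real.logb 2 ((n : ℝ) + 2) := by
      rw [Real.le_logb_iff_rpow_le (by norm_num) (by positivity), Real.rpow_natCast]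
      have : ((2 ^ k : ℕ) : ℝ) ≤ n := by exact_mod_cast this
      push_cast at this
      linarith
    rw [hk]; push_cast; linarith
  have h4 : (C D (pref om n) : ℝ) ≤ 2 * n.size + c := by exact_mod_cast h1
  have h5 : (c : ℝ) ≤ c * Real.logb 2 ((n : ℝ) + 2) := by
    nlinarith [Nat.cast_nonneg (α := ℝ) c]
  linarith

noncomputable def V (n i : ℕ) : Bool := (vec (out (hist n)) n).getD i false

theorem V_eq (n i : ℕ) : V n i = (decide (i < n) && sel (pref om n) n i) := by
  unfold V vec
  rw [out_hist]
  by_cases h : i < n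
  · simp [h]
  · simp [h]

theorem cnt_succ (n i : ℕ) (b : Bool) :
    cnt (hist (n + 1)) i b =
      bif (V n i && (om n == b)) then cnt (hist n) i b + 1 else cnt (hist n) i b := rfl

theorem gg_pos {m : ℕ} (h : 0 < m) : 0 < gg m :=
  Nat.mul_pos h (Nat.sqrt_pos.2 h)

theorem gg_mono {m n : ℕ} (h : m ≤ n) : gg m ≤ gg n :=
  Nat.mul_le_mul h (Nat.sqrt_le_sqrt h)

theorem den_pos (H : Hist) (i : ℕ) : 0 < den H i :=
  Nat.mul_pos (by positivity) (gg_pos (by omega))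

theorem acc_succ (H : Hist) (v : List Bool) (n : ℕ) :
    acc H v (n + 1) = stepF H v (acc H v n) n := by
  simp [acc, List.range_succ]

theorem acc_spec (H : Hist) (v : List Bool) (n : ℕ) :
    0 < (acc H v n).2.2 ∧
    ((acc H v n).1 : ℝ) / (acc H v n).2.2 =
      ∑ i ∈ Finset.range n, (if v.getD i false = true then (cnt H i true : ℝ) / den H i else 0) ∧
    ((acc H v n).2.1 : ℝ) / (acc H v n).2.2 =
      ∑ i ∈ Finset.range n, (if v.getD i false = true then (cnt H i false : ℝ) / den H i else 0)
    := by
  induction n with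
  | zero => simp [acc]
  | succ n ih =>
    obtain ⟨h0, h1, h2⟩ := ih
    rw [acc_succ, Finset.sum_range_succ, Finset.sum_range_succ, ← h1, ← h2]
    have hd := den_pos H n
    have hd' : (den H n : ℝ) ≠ 0 := by positivity
    have h0' : ((acc H v n).2.2 : ℝ) ≠ 0 := by positivity
    unfold stepF
    cases v.getD n false
    · simp [h0]
    · simp only [cond_true, if_true]
      refine ⟨Nat.mul_pos h0 hd, ?_, ?_⟩
      · push_cast; field_simp
      · push_cast; field_simp

noncomputable def sg (n : ℕ) : ℝ := if om n = true then 1 else -1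

noncomputable def S (n i : ℕ) : ℝ := (cnt (hist n) i true : ℝ) - cnt (hist n) i false

noncomputable def mm (n i : ℕ) : ℕ := cnt (hist n) i true + cnt (hist n) i false

theorem decision (n : ℕ) :
    sg n * ∑ i ∈ Finset.range n,
      (if V n i = true then S n i / (2 ^ i * gg (mm n i + 1)) else 0) ≤ 0 := by
  have hlen : (vec (out (hist n)) n).length = n := by simp [vec]
  obtain ⟨h0, h1, h2⟩ := acc_spec (hist n) (vec (out (hist n)) n) n
  have hs : ∑ i ∈ Finset.range n,
      (if V n i = true then S n i / (2 ^ i * gg (mm n i + 1)) else 0) =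
      ((acc (hist n) (vec (out (hist n)) n) n).1 : ℝ) / (acc (hist n) (vec (out (hist n)) n) n).2.2
      - ((acc (hist n) (vec (out (hist n)) n) n).2.1 : ℝ) /
        (acc (hist n) (vec (out (hist n)) n) n).2.2 := by
    rw [h1, h2, ← Finset.sum_sub_distrib]
    refine Finset.sum_congr rfl fun i _ => ?_
    change (if V n i = true then _ else _) = (if V n i = true then _ else _) -
      (if V n i = true then _ else _)
    split_ifs
    · simp only [S, mm, den]
      push_cast
      ring
    · simp
  rw [hs, ← sub_div]
  have h0' : (0 : ℝ) < ((acc (hist n) (vec (out (hist n)) n) n).2.2 : ℝ) := by exact_mod_cast h0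
  have hom : om n = decide ((acc (hist n) (vec (out (hist n)) n) n).1 ≤
      (acc (hist n) (vec (out (hist n)) n) n).2.1) := by
    unfold om dec
    rw [hlen]
  unfold sg
  rw [hom]
  simp only [decide_eq_true_eq]
  split_ifs with h
  · rw [one_mul]
    refine div_nonpos_of_nonpos_of_nonneg ?_ h0'.le
    have : ((acc (hist n) (vec (out (hist n)) n) n).1 : ℝ) ≤
      (acc (hist n) (vec (out (hist n)) n) n).2.1 := by exact_mod_cast h
    linarith
  · have : ((acc (hist n) (vec (out (hist n)) n) n).2.1 : ℝ) ≤
      (acc (hist n) (vec (out (hist n)) n) n).1 := by exact_mod_cast (not_le.1 h).le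
    have := div_nonneg (sub_nonneg.2 this) h0'.le
    linarith

noncomputable def GG (m : ℕ) : ℝ := ∑ k ∈ Finset.range m, 1 / (gg (k + 1) : ℝ)

theorem gg_le (m : ℕ) : (gg m : ℝ) ≤ m * Real.sqrt m := by
  unfold gg
  push_cast
  gcongr
  exact Real.nat_sqrt_le_real_sqrt

theorem le_gg (m : ℕ) (hm : 0 < m) : (m : ℝ) ^ (3 / 2 : ℝ) ≤ 2 * gg m := by
  have h1 : Real.sqrt m ≤ Nat.sqrt m + 1 := Real.real_sqrt_le_nat_sqrt_succ
  have h2 : (1 : ℝ) ≤ Nat.sqrt m := by exact_mod_cast Nat.sqrt_pos.2 hm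
  have h3 : (m : ℝ) ^ (3 / 2 : ℝ) = m * Real.sqrt m := by
    rw [Real.sqrt_eq_rpow, ← Real.rpow_one_add' (by positivity) (by norm_num)]
    norm_num
  rw [h3]
  unfold gg
  push_cast
  have : (m : ℝ) * Real.sqrt m ≤ m * (2 * Nat.sqrt m) := by
    gcongr
    linarith
  linarith

theorem GG_bdd : ∃ B : ℝ, 0 ≤ B ∧ ∀ m, GG m ≤ B := by
  have hs : Summable (fun k : ℕ => 1 / (gg (k + 1) : ℝ)) := by
    have h1 : Summable (fun k : ℕ => 2 * (1 / ((k : ℝ) ^ (3 / 2 : ℝ)))) :=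
      (Real.summable_one_div_nat_rpow.2 (by norm_num)).mul_left 2
    have h2 := (summable_nat_add_iff 1).2 h1
    refine Summable.of_nonneg_of_le (fun k => by positivity) (fun k => ?_) h2
    have h3 := le_gg (k + 1) (by omega)
    have h4 : (0 : ℝ) < ((k + 1 : ℕ) : ℝ) ^ (3 / 2 : ℝ) := by positivity
    have h5 : (0 : ℝ) < gg (k + 1) := by exact_mod_cast gg_pos (by omega)
    rw [mul_one_div, div_le_div_iff₀ h5 h4]
    linarith
  refine ⟨∑' k : ℕ, 1 / (gg (k + 1) : ℝ), tsum_nonneg fun k => by positivity, fun m => ?_⟩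
  exact hs.sum_le_tsum _ fun k _ => by positivity

theorem S_succ (n i : ℕ) : S (n + 1) i = S n i + if V n i = true then sg n else 0 := by
  unfold S sg
  rw [cnt_succ, cnt_succ]
  cases V n i <;> cases om n <;> simp <;> ring

theorem mm_succ (n i : ℕ) : mm (n + 1) i = mm n i + if V n i = true then 1 else 0 := by
  unfold mm
  rw [cnt_succ, cnt_succ]
  cases V n i <;> cases om n <;> simp <;> ring

theorem S_zero_of_mm {n i : ℕ} (h : mm n i = 0) : S n i = 0 := by
  unfold mm at h
  unfold S
  have h1 : cnt (hist n) i true = 0 := by omega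
  have h2 : cnt (hist n) i false = 0 := by omega
  simp [h1, h2]

noncomputable def Psi (n i : ℕ) : ℝ := (S n i ^ 2 / gg (mm n i) - GG (mm n i)) / 2 ^ i

theorem Psi_succ (n i : ℕ) : Psi (n + 1) i ≤ Psi n i +
    2 * (sg n * if V n i = true then S n i / (2 ^ i * gg (mm n i + 1)) else 0) := by
  unfold Psi
  rw [S_succ, mm_succ]
  split_ifs with h
  · have hG : GG (mm n i + 1) = GG (mm n i) + 1 / gg (mm n i + 1) := by
      unfold GG; rw [Finset.sum_range_succ]
    have hsg : sg n ^ 2 = 1 := by unfold sg; split_ifs <;> norm_num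
    have hp : (0 : ℝ) < gg (mm n i + 1) := by exact_mod_cast gg_pos (by omega)
    have key : S n i ^ 2 / gg (mm n i + 1) ≤ S n i ^ 2 / gg (mm n i) := by
      rcases Nat.eq_zero_or_pos (mm n i) with h0 | h0
      · rw [S_zero_of_mm h0]; simp
      · have h1 : (0 : ℝ) < gg (mm n i) := by exact_mod_cast gg_pos h0
        have h2 : (gg (mm n i) : ℝ) ≤ gg (mm n i + 1) := by exact_mod_cast gg_mono (by omega)
        gcongr
    have e : (S n i + sg n) ^ 2 / gg (mm n i + 1) =
        S n i ^ 2 / gg (mm n i + 1) + 2 * (sg n * S n i) / gg (mm n i + 1)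
          + 1 / gg (mm n i + 1) := by
      rw [add_sq, hsg]; ring
    have e2 : 2 * (sg n * (S n i / (2 ^ i * gg (mm n i + 1)))) =
        (2 * (sg n * S n i) / gg (mm n i + 1)) / 2 ^ i := by
      field_simp
    rw [e2, ← add_div, hG, e]
    gcongr
    linarith
  · simp

theorem Psi_sum (N n : ℕ) (h : n ≤ N) : ∑ i ∈ Finset.range N, Psi n i ≤ 0 := by
  induction n with
  | zero => simp [Psi, S, mm, GG, hist, cnt]
  | succ n ih =>
    have h1 := ih (by omega)
    have h2 : ∑ i ∈ Finset.range N, Psi (n + 1) i ≤ ∑ i ∈ Finset.range N, (Psi n i +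
      2 * (sg n * if V n i = true then S n i / (2 ^ i * gg (mm n i + 1)) else 0)) :=
      Finset.sum_le_sum fun i _ => Psi_succ n i
    rw [Finset.sum_add_distrib, ← Finset.mul_sum, ← Finset.mul_sum] at h2
    have h3 : ∑ i ∈ Finset.range n,
        (if V n i = true then S n i / (2 ^ i * gg (mm n i + 1)) else 0) =
      ∑ i ∈ Finset.range N,
        (if V n i = true then S n i / (2 ^ i * gg (mm n i + 1)) else 0) := by
      refine Finset.sum_subset (Finset.range_subset_range.2 (by omega)) fun i _ hi => ?_
      have : ¬ i < n := by simpa using hi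
      simp [V_eq, this]
    have h4 := decision n
    rw [h3] at h4
    linarith

theorem S_bound : ∃ B : ℝ, 0 ≤ B ∧ ∀ n i, S n i ^ 2 ≤ 2 ^ i * B * gg (mm n i) := by
  obtain ⟨B, hB0, hB⟩ := GG_bdd
  refine ⟨2 * B, by positivity, fun n i => ?_⟩
  have h1 := Psi_sum (n + i + 1) n (by omega)
  unfold Psi at h1
  simp only [sub_div] at h1
  rw [Finset.sum_sub_distrib] at h1
  have h2 : ∑ j ∈ Finset.range (n + i + 1), GG (mm n j) / 2 ^ j ≤ B * 2 := by
    calc ∑ j ∈ Finset.range (n + i + 1), GG (mm n j) / 2 ^ j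
        ≤ ∑ j ∈ Finset.range (n + i + 1), B * (1 / 2) ^ j := by
          refine Finset.sum_le_sum fun j _ => ?_
          rw [one_div, inv_pow, ← div_eq_mul_inv]
          gcongr
          exact hB _
      _ ≤ B * 2 := by
          rw [← Finset.mul_sum]
          gcongr
          exact sum_geometric_two_le _
  have h3 : S n i ^ 2 / gg (mm n i) / 2 ^ i ≤
      ∑ j ∈ Finset.range (n + i + 1), S n j ^ 2 / gg (mm n j) / 2 ^ j :=
    Finset.single_le_sum (f := fun j => S n j ^ 2 / gg (mm n j) / 2 ^ j)
      (fun j _ => by positivity) (Finset.mem_range.2 (by omega))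
  rcases Nat.eq_zero_or_pos (mm n i) with h0 | h0
  · have hz : (0 : ℝ) ^ 2 = 0 := by norm_num
    rw [S_zero_of_mm h0, hz]; positivity
  · have h4 : (0 : ℝ) < gg (mm n i) := by exact_mod_cast gg_pos h0
    have h5 : S n i ^ 2 / gg (mm n i) / 2 ^ i ≤ 2 * B := by linarith
    rw [div_div, div_le_iff₀ (by positivity)] at h5
    linarith

theorem count_split (p : ℕ → Prop) [DecidablePred p] (q : ℕ → Bool) (n : ℕ) :
    Nat.count (fun k => p k ∧ q k = true) n + Nat.count (fun k => p k ∧ q k = false) n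
      = Nat.count p n := by
  induction n with
  | zero => simp
  | succ n ih =>
    simp only [Nat.count_succ]
    by_cases hp : p n <;> cases hq : q n <;> simp [hp] <;> omega

theorem count_filter (p : ℕ → Prop) [DecidablePred p] (q : ℕ → Bool) (n : ℕ) :
    ((Finset.range (Nat.count p n)).filter (fun k => q (Nat.nth p k) = true)).card =
      Nat.count (fun k => p k ∧ q k = true) n := by
  induction n with
  | zero => simp
  | succ n ih =>
    simp only [Nat.count_succ]
    by_cases hp : p n
    · simp only [hp, if_true, true_and]
      rw [Finset.range_add_one, Finset.filter_insert, Nat.nth_count hp]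
      split_ifs with hq
      · rw [Finset.card_insert_of_notMem (by simp), ih]
      · rw [ih]; simp
    · simp [hp, ih]

theorem exists_index (r : BStr → Bool) (hr : Computable r) :
    ∃ i, ∀ n, V n i = (decide (2 ^ i ≤ n) && r (pref om n)) := by
  obtain ⟨c, hc⟩ := Code.exists_code.1 hr
  refine ⟨encode c, fun n => ?_⟩
  have he : ∀ x : BStr, Code.eval (ofNat Code (encode c)) (encode x) =
      Part.some (encode (r x)) := by
    intro x
    rw [Denumerable.ofNat_encode, hc]
    simp
  have hchi : chi (encode c) = true := by
    unfold chi
    rw [decide_eq_true_eq]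
    intro x
    rw [he]
    trivial
  rw [V_eq]
  unfold sel
  rw [he, hchi]
  by_cases h : 2 ^ (encode c) ≤ n
  · have : encode c < n := lt_of_lt_of_le Nat.lt_two_pow_self h
    cases r (pref om n) <;> simp [h, this]
  · simp [h]

theorem cnt_bounds (r : BStr → Bool) (i : ℕ) (p : ℕ → Prop) [DecidablePred p]
    (hp : p = fun k => r (pref om k) = true)
    (hi : ∀ n, V n i = (decide (2 ^ i ≤ n) && r (pref om n))) (b : Bool) (n : ℕ) :
    cnt (hist n) i b ≤ Nat.count (fun k => p k ∧ om k = b) n ∧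
    Nat.count (fun k => p k ∧ om k = b) n ≤ cnt (hist n) i b + min n (2 ^ i) := by
  induction n with
  | zero => simp [hist, cnt]
  | succ n ih =>
    rw [cnt_succ, hi, Nat.count_succ]
    have hpn : p n ↔ r (pref om n) = true := by rw [hp]
    simp only [hpn]
    by_cases h : 2 ^ i ≤ n
    · cases hr : r (pref om n) <;> cases ho : om n <;> cases b <;> simp [h] <;> omega
    · cases hr : r (pref om n) <;> cases ho : om n <;> cases b <;> simp [h] <;> omega

theorem om_random : MisesChurchRandom om := by
  intro r hr hinf
  obtain ⟨i, hi⟩ := exists_index r hr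
  obtain ⟨B, hB0, hB⟩ := S_bound
  obtain ⟨p, hp⟩ : ∃ p : ℕ → Prop, p = fun n => r (pref om n) = true := ⟨_, rfl⟩
  rw [← hp]
  have hinf : (Set.ofPred p).Infinite := by rw [hp]; exact hinf
  set A : ℕ → ℕ := fun m =>
    ((Finset.range m).filter (fun k => om (Nat.nth p k) = true)).card with hA
  change Filter.Tendsto (fun m : ℕ => (A m : ℝ) / m) Filter.atTop (nhds (1 / 2 : ℝ))
  have key : ∀ m : ℕ, (2 * (A m : ℝ) - m) ^ 2 ≤
      2 * (2 ^ i * B) * (m * Real.sqrt m) + 2 * (2 ^ i) ^ 2 := by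
    intro m
    set n := Nat.nth p m with hn
    have hcm : Nat.count p n = m := Nat.count_nth_of_infinite hinf m
    have h1 : A m = Nat.count (fun k => p k ∧ om k = true) n := by
      rw [← count_filter, hcm]
    have h2 := count_split p om n
    rw [hcm, ← h1] at h2
    obtain ⟨a1, a2⟩ := cnt_bounds r i p hp hi true n
    obtain ⟨b1, b2⟩ := cnt_bounds r i p hp hi false n
    rw [← h1] at a1 a2
    set Z := Nat.count (fun k => p k ∧ om k = false) n
    have hK : min n (2 ^ i) ≤ 2 ^ i := min_le_right _ _
    have a2' : A m ≤ cnt (hist n) i true + 2 ^ i := by omega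
    have b2' : Z ≤ cnt (hist n) i false + 2 ^ i := by omega
    have hmm : mm n i ≤ m := by unfold mm; omega
    have hS := hB n i
    have hg : (gg (mm n i) : ℝ) ≤ m * Real.sqrt m :=
      le_trans (by exact_mod_cast gg_mono hmm) (gg_le m)
    have hS' : S n i ^ 2 ≤ 2 ^ i * B * (m * Real.sqrt m) :=
      hS.trans (by gcongr)
    have h2' : (m : ℝ) = A m + Z := by exact_mod_cast h2.symm
    have a1R : (cnt (hist n) i true : ℝ) ≤ A m := by exact_mod_cast a1
    have b1R : (cnt (hist n) i false : ℝ) ≤ Z := by exact_mod_cast b1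
    have a2R : (A m : ℝ) ≤ cnt (hist n) i true + 2 ^ i := by exact_mod_cast a2'
    have b2R : (Z : ℝ) ≤ cnt (hist n) i false + 2 ^ i := by exact_mod_cast b2'
    have e : 2 * (A m : ℝ) - m = S n i + ((2 * (A m : ℝ) - m) - S n i) := by ring
    have hd : ((2 * (A m : ℝ) - m) - S n i) ^ 2 ≤ (2 ^ i) ^ 2 := by
      apply sq_le_sq'
      · rw [h2']; unfold S; linarith
      · rw [h2']; unfold S; linarith
    rw [e]
    nlinarith [sq_nonneg (S n i - ((2 * (A m : ℝ) - m) - S n i))]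
  have hsq : Filter.Tendsto (fun m : ℕ => ((A m : ℝ) / m - 1 / 2) ^ 2) Filter.atTop (nhds 0) := by
    have hlim : Filter.Tendsto (fun m : ℕ => (2 ^ i * B / 2) * (Real.sqrt m)⁻¹ +
        ((2 ^ i) ^ 2 / 2) * ((m : ℝ)⁻¹) ^ 2) Filter.atTop (nhds 0) := by
      have t1 : Filter.Tendsto (fun m : ℕ => (m : ℝ)⁻¹) Filter.atTop (nhds 0) :=
        tendsto_inv_atTop_zero.comp tendsto_natCast_atTop_atTop
      have t2 : Filter.Tendsto (fun m : ℕ => (Real.sqrt m)⁻¹) Filter.atTop (nhds 0) :=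
        tendsto_inv_atTop_zero.comp
          (Real.tendsto_sqrt_atTop.comp tendsto_natCast_atTop_atTop)
      have := (t2.const_mul (2 ^ i * B / 2)).add ((t1.pow 2).const_mul ((2 ^ i) ^ 2 / 2))
      simpa using this
    refine squeeze_zero' (Filter.Eventually.of_forall fun m => sq_nonneg _) ?_ hlim
    filter_upwards [Filter.eventually_gt_atTop 0] with m hm
    have hm' : (0 : ℝ) < m := by exact_mod_cast hm
    have hs : 0 < Real.sqrt m := Real.sqrt_pos.2 hm'
    have hss : Real.sqrt m ^ 2 = m := Real.sq_sqrt hm'.le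
    have e1 : ((A m : ℝ) / m - 1 / 2) ^ 2 = (2 * (A m : ℝ) - m) ^ 2 / (4 * m ^ 2) := by
      field_simp
      ring
    have e2 : (2 ^ i * B / 2) * (Real.sqrt m)⁻¹ + ((2 ^ i) ^ 2 / 2) * ((m : ℝ)⁻¹) ^ 2 =
        (2 * (2 ^ i * B) * (m * Real.sqrt m) + 2 * (2 ^ i) ^ 2) / (4 * m ^ 2) := by
      have e3 : (Real.sqrt m)⁻¹ = Real.sqrt m / m := by
        rw [eq_div_iff hm'.ne', ← hss, sq, ← mul_assoc, Real.sqrt_mul_self hs.le, inv_mul_cancel₀ hs.ne', one_mul]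
      rw [e3]
      field_simp
      ring
    rw [e1, e2]
    gcongr
    exact key m
  have h := (Real.continuous_sqrt.tendsto 0).comp hsq
  simp only [Real.sqrt_zero] at h
  rw [tendsto_iff_norm_sub_tendsto_zero]
  refine h.congr fun m => ?_
  simp only [Function.comp, Real.sqrt_sq_eq_abs, Real.norm_eq_abs]

end KolMC

/-- **Kolmogorov's theorem** separating the Mises–Church definition of a
Bernoulli sequence from complexity-based randomness: there is a Mises–Church
random sequence all of whose prefixes have complexity `O(log n)`. -/
theorem stmt11 (D : BStr →. BStr) (hD : OptimalDM D) :
    ∃ ω : ℕ → Bool, MisesChurchRandom ω ∧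
      ∃ c : ℝ, ∀ n : ℕ, 1 ≤ n →
        (C D (pref ω n) : ℝ) ≤ c * Real.logb 2 ((n : ℝ) + 2) := by
  exact ⟨KolMC.om, KolMC.om_random, KolMC.C_bound D hD⟩
end
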